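/- arXiv:1806.03523 — 3 statements merged into one kernel-verified Lean document; each statement's English description precedes it below -/
import Mathlib

section
/- Let a be an ideal linked over M and t = grade_M(a). Then √(a + Ann_R M) = ⋂_{p ∈ Ass_R H^t_a(M)} p. -/
universe u

open RingTheory.Sequence CategoryTheory

noncomputable section

/-- `N :_M a`, set of `m : M` with `a • m ⊆ N`. -/
def Submodule.modColon {R : Type u} [CommRing R] {M : Type u} [AddCommGroup M] [Module R M]
    (N : Submodule R M) (a : Ideal R) : Submodule R M :=
  ⨅ r ∈ a, N.comap (LinearMap.lsmul R M r)

/-- The ideals `a` and `b` are linked by `I` over `M`: `I ⊆ a ⊓ b` is generated by an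
`M`-regular sequence, `bM = IM :_M a`, `aM = IM :_M b`, and `aM ≠ M ≠ bM`. -/
def Ideal.IsLinkedBy {R : Type u} [CommRing R] (M : Type u) [AddCommGroup M] [Module R M]
    (I a b : Ideal R) : Prop :=
  (∃ rs : List R, RingTheory.Sequence.IsRegular M rs ∧ I = Ideal.ofList rs) ∧
  I ≤ a ⊓ b ∧
  a • (⊤ : Submodule R M) ≠ ⊤ ∧ b • (⊤ : Submodule R M) ≠ ⊤ ∧
  Submodule.modColon (I • (⊤ : Submodule R M)) a = b • (⊤ : Submodule R M) ∧
  Submodule.modColon (I • (⊤ : Submodule R M)) b = a • (⊤ : Submodule R M)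

/-- Cohomological dimension `cd(a, M) = sup { i | H^i_a(M) ≠ 0 }`. -/
def cohDim {R : Type u} [CommRing R] (a : Ideal R) (M : Type u) [AddCommGroup M]
    [Module R M] : ℕ∞ :=
  sSup {n : ℕ∞ | ∃ i : ℕ, n = i ∧ Nontrivial ↥((localCohomology a i).obj (ModuleCat.of R M))}

/-- `grade_M(a)`: the supremum of lengths of `M`-regular sequences contained in `a`. -/
def gradeM {R : Type u} [CommRing R] (a : Ideal R) (M : Type u) [AddCommGroup M]
    [Module R M] : ℕ :=
  sSup {n : ℕ | ∃ rs : List R, rs.length = n ∧ (∀ r ∈ rs, r ∈ a) ∧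
    RingTheory.Sequence.IsRegular M rs}

open Limits Opposite

section ExtRep
variable {R : Type u} [CommRing R]

/-- the functor `Hom(-, Y)` with values in the opposite category -/
abbrev yoF (Y : ModuleCat.{u} R) : ModuleCat.{u} R ⥤ (ModuleCat.{u} R)ᵒᵖ :=
  ((linearYoneda R (ModuleCat.{u} R)).obj Y).rightOp

/-- the complex `Hom(P, Y)` -/
abbrev yoC {X : ModuleCat.{u} R} (P : ProjectiveResolution X) (Y : ModuleCat.{u} R) :
    HomologicalComplex (ModuleCat.{u} R)ᵒᵖ (ComplexShape.down ℕ) :=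
  ((yoF Y).mapHomologicalComplex _).obj P.complex

/-- the `i`-th Ext module -/
abbrev extM (X Y : ModuleCat.{u} R) (i : ℕ) : ModuleCat.{u} R :=
  ((Ext R (ModuleCat.{u} R) i).obj (op X)).obj Y

/-- comparison iso -/
def extIso {X : ModuleCat.{u} R} (P : ProjectiveResolution X) (Y : ModuleCat.{u} R) (i : ℕ) :
    ((yoF Y).leftDerived i).obj X ≅ (yoC P Y).homology i :=
  P.isoLeftDerivedObj (yoF Y) i

/-- projection from cocycles to the derived functor -/
def extCls {X : ModuleCat.{u} R} (P : ProjectiveResolution X) (Y : ModuleCat.{u} R) (i : ℕ) :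
    ((yoC P Y).opcycles i).unop ⟶ (((yoF Y).leftDerived i).obj X).unop :=
  ((yoC P Y).homologyι i).unop ≫ (extIso P Y i).hom.unop

/-- inclusion of cocycles -/
def extCoc {X : ModuleCat.{u} R} (P : ProjectiveResolution X) (Y : ModuleCat.{u} R) (i : ℕ) :
    ((yoC P Y).opcycles i).unop ⟶ ((yoC P Y).X i).unop :=
  ((yoC P Y).pOpcycles i).unop

lemma extCls_epi {X : ModuleCat.{u} R} (P : ProjectiveResolution X) (Y : ModuleCat.{u} R) (i : ℕ) :
    Epi (extCls P Y i) := by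
  have : Epi ((yoC P Y).homologyι i).unop := unop_epi_of_mono _
  have : Epi (extIso P Y i).hom.unop := unop_epi_of_mono _
  exact epi_comp _ _

lemma extCoc_mono {X : ModuleCat.{u} R} (P : ProjectiveResolution X) (Y : ModuleCat.{u} R) (i : ℕ) :
    Mono (extCoc P Y i) := unop_mono_of_epi ((yoC P Y).pOpcycles i)

/-- `c` is a cocycle representing `z` -/
def ExtRep {X : ModuleCat.{u} R} (P : ProjectiveResolution X) (Y : ModuleCat.{u} R) (i : ℕ)
    (c : P.complex.X i ⟶ Y) (z : extM X Y i) : Prop :=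
  ∃ e, (extCoc P Y i).hom e = c ∧ (extCls P Y i).hom e = z

variable {X : ModuleCat.{u} R} (P : ProjectiveResolution X) (Y : ModuleCat.{u} R) (i : ℕ)

lemma ExtRep.exists_rep (z : extM X Y i) : ∃ c, ExtRep P Y i c z := by
  have := extCls_epi P Y i
  obtain ⟨e, he⟩ := (ModuleCat.epi_iff_surjective _).1 this z
  exact ⟨_, e, rfl, he⟩

lemma ExtRep.exists_of_cocycle (c : P.complex.X i ⟶ Y) (hc : P.complex.d (i+1) i ≫ c = 0) :
    ∃ z, ExtRep P Y i c z := by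
  have h1 : (ShortComplex.mk ((yoC P Y).d (i+1) i) ((yoC P Y).pOpcycles i)
    ((yoC P Y).d_pOpcycles (i+1) i)).Exact :=
    ShortComplex.exact_of_g_is_cokernel _ ((yoC P Y).opcyclesIsCokernel (i+1) i (by simp))
  have h2 := h1.unop
  rw [ShortComplex.moduleCat_exact_iff] at h2
  obtain ⟨e, he⟩ := h2 c hc
  exact ⟨_, e, he, rfl⟩

variable {P Y i}
lemma ExtRep.cocycle {c : P.complex.X i ⟶ Y} {z : extM X Y i} (h : ExtRep P Y i c z) (j : ℕ) :
    P.complex.d j i ≫ c = 0 := by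
  obtain ⟨e, rfl, rfl⟩ := h
  have h0 : ((yoC P Y).pOpcycles i).unop ≫ ((yoC P Y).d j i).unop = 0 :=
    congrArg Quiver.Hom.unop ((yoC P Y).d_pOpcycles j i)
  exact congrArg (fun f => f.hom e) h0

lemma extCoc_injective : Function.Injective (extCoc P Y i).hom := by
  have := extCoc_mono P Y i
  exact (ModuleCat.mono_iff_injective _).1 this

lemma ExtRep.eq_zero_iff {c : P.complex.X i ⟶ Y} {z : extM X Y i} (h : ExtRep P Y i c z) :
    z = 0 ↔ ∃ j, ∃ g : P.complex.X j ⟶ Y, P.complex.d i j ≫ g = c := by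
  obtain ⟨e, rfl, rfl⟩ := h
  have h1 : (ShortComplex.mk ((yoC P Y).homologyι i)
     ((yoC P Y).fromOpcycles i ((ComplexShape.down ℕ).next i)) (by simp)).Exact :=
    ShortComplex.exact_of_f_is_kernel _ ((yoC P Y).homologyIsKernel i _ rfl)
  have h2 := h1.unop
  rw [ShortComplex.moduleCat_exact_iff] at h2
  have hfac : ∀ j, ((yoC P Y).fromOpcycles i j).unop ≫ extCoc P Y i = ((yoC P Y).d i j).unop := by
    intro j
    exact congrArg Quiver.Hom.unop ((yoC P Y).p_fromOpcycles i j)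
  have hz : ∀ j, ((yoC P Y).fromOpcycles i j).unop ≫ extCls P Y i = 0 := by
    intro j
    have := congrArg Quiver.Hom.unop ((yoC P Y).homologyι_comp_fromOpcycles i j)
    have h' : ((yoC P Y).fromOpcycles i j).unop ≫ ((yoC P Y).homologyι i).unop = 0 := this
    unfold extCls
    rw [← Category.assoc, h', zero_comp]
  constructor
  · intro hz
    have hz' : ((yoC P Y).homologyι i).unop.hom e = 0 := by
      have : Mono (extIso P Y i).hom.unop := unop_mono_of_epi _
      refine (ModuleCat.mono_iff_injective _).1 this ?_
      exact Eq.trans hz (map_zero (extIso P Y i).hom.unop.hom).symm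
    obtain ⟨g, hg⟩ := h2 e hz'
    refine ⟨_, g, ?_⟩
    have := congrArg (fun f => f.hom g) (hfac ((ComplexShape.down ℕ).next i))
    refine this.symm.trans ?_
    exact congrArg (extCoc P Y i).hom hg
  · rintro ⟨j, g, hg⟩
    have h3 := congrArg (fun f => f.hom g) (hfac j)
    have h4 := congrArg (fun f => f.hom g) (hz j)
    have h5 : e = ((yoC P Y).fromOpcycles i j).unop.hom g :=
      extCoc_injective (hg.symm.trans h3.symm)
    rw [h5]
    exact h4

lemma ExtRep.smul {c : P.complex.X i ⟶ Y} {z : extM X Y i} (h : ExtRep P Y i c z) (r : R) :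
    ExtRep P Y i (r • c) (r • z) := by
  obtain ⟨e, rfl, rfl⟩ := h
  exact ⟨r • e, map_smul (extCoc P Y i).hom r e, map_smul (extCls P Y i).hom r e⟩

lemma ExtRep.map {X' : ModuleCat.{u} R} {P' : ProjectiveResolution X'} (f : X' ⟶ X)
    (φ : P'.complex ⟶ P.complex) (comm : φ.f 0 ≫ P.π.f 0 = P'.π.f 0 ≫ f)
    {c : P.complex.X i ⟶ Y} {z : extM X Y i} (h : ExtRep P Y i c z) :
    ExtRep P' Y i (φ.f i ≫ c) ((((Ext R (ModuleCat.{u} R) i).map f.op).app Y).hom z) := by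
  obtain ⟨e, rfl, rfl⟩ := h
  have h1 := ProjectiveResolution.isoLeftDerivedObj_hom_naturality f P' P φ comm (yoF Y) i
  let ψ := ((yoF Y).mapHomologicalComplex (ComplexShape.down ℕ)).map φ
  have h2 := HomologicalComplex.homologyι_naturality ψ i
  have h3 := HomologicalComplex.p_opcyclesMap ψ i
  refine ⟨(HomologicalComplex.opcyclesMap ψ i).unop.hom e, ?_, ?_⟩
  · exact congrArg (fun f => f.unop.hom e) h3
  · have h1' : ((yoF Y).leftDerived i).map f ≫ (extIso P Y i).hom =
        (extIso P' Y i).hom ≫ HomologicalComplex.homologyMap ψ i := h1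
    have h4 : ((yoF Y).leftDerived i).map f ≫ ((extIso P Y i).hom ≫ (yoC P Y).homologyι i) =
      ((extIso P' Y i).hom ≫ (yoC P' Y).homologyι i) ≫
        HomologicalComplex.opcyclesMap ψ i := by
      rw [Category.assoc, ← h2, ← Category.assoc, h1', Category.assoc]
    exact (congrArg (fun f => f.unop.hom e) h4).symm

end ExtRep

section LC
variable {R : Type u} [CommRing R] (a : Ideal R)

/-- the module `R / a^n` -/
abbrev qM (n : ℕ) : ModuleCat.{u} R :=
  (localCohomology.ringModIdeals (localCohomology.idealPowersDiagram a)).obj (op n)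

/-- the projection `R / a^m → R / a^n` -/
def qT {n m : ℕ} (h : n ≤ m) : qM a m ⟶ qM a n :=
  (localCohomology.ringModIdeals (localCohomology.idealPowersDiagram a)).map (homOfLE h).op

/-- projective resolution of `R / a^n` -/
def qP (n : ℕ) : ProjectiveResolution (qM a n) := projectiveResolution (qM a n)

/-- comparison of resolutions -/
def qL {n m : ℕ} (h : n ≤ m) : (qP a m).complex ⟶ (qP a n).complex :=
  ProjectiveResolution.lift (qT a h) _ _

lemma qL_comm {n m : ℕ} (h : n ≤ m) :
    (qL a h).f 0 ≫ (qP a n).π.f 0 = (qP a m).π.f 0 ≫ qT a h :=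
  ProjectiveResolution.lift_commutes_zero _ _ _

/-- the local cohomology module -/
abbrev lcM (i : ℕ) (Y : ModuleCat.{u} R) : ModuleCat.{u} R := (localCohomology a i).obj Y

/-- The cocone. -/
def lcCocone (i : ℕ) (Y : ModuleCat.{u} R) :
    Cocone (localCohomology.diagram (localCohomology.idealPowersDiagram a) i ⋙
      (evaluation _ _).obj Y) :=
  (((evaluation _ _).obj Y).mapCocone
    (colimit.cocone (localCohomology.diagram (localCohomology.idealPowersDiagram a) i)))

/-- It is a colimit cocone. -/
def lcCoconeIsColimit (i : ℕ) (Y : ModuleCat.{u} R) : IsColimit (lcCocone a i Y) :=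
  isColimitOfPreserves _ (colimit.isColimit _)

/-- structure map -/
def lcι (i : ℕ) (Y : ModuleCat.{u} R) (n : ℕ) : extM (qM a n) Y i ⟶ lcM a i Y :=
  (lcCocone a i Y).ι.app (op (op n))

lemma lcι_w (i : ℕ) (Y : ModuleCat.{u} R) {n m : ℕ} (h : n ≤ m) :
    ((Ext R (ModuleCat.{u} R) i).map (qT a h).op).app Y ≫ lcι a i Y m = lcι a i Y n :=
  (lcCocone a i Y).w (homOfLE h).op.op

instance forget_preserves_lc : PreservesColimitsOfShape ℕᵒᵖᵒᵖ (forget (ModuleCat.{u} R)) := by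
  have := preservesSmallestFilteredColimits_of_preservesFilteredColimits (forget (ModuleCat.{u} R))
  infer_instance

lemma lcι_surj (i : ℕ) (Y : ModuleCat.{u} R) (z : lcM a i Y) :
    ∃ n, ∃ e, (lcι a i Y n).hom e = z := by
  obtain ⟨j, y, hy⟩ := Concrete.isColimit_exists_rep _ (lcCoconeIsColimit a i Y) z
  exact ⟨j.unop.unop, y, hy⟩

lemma lcι_eq_zero (i : ℕ) (Y : ModuleCat.{u} R) {n : ℕ} (e : extM (qM a n) Y i)
    (he : (lcι a i Y n).hom e = 0) :
    ∃ m, ∃ h : n ≤ m, (((Ext R (ModuleCat.{u} R) i).map (qT a h).op).app Y).hom e = 0 := by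
  have h0 : (lcι a i Y n).hom e = (lcι a i Y n).hom 0 := by rw [he, map_zero]
  obtain ⟨k, f, g, hfg⟩ := (Concrete.isColimit_rep_eq_iff_exists _ (lcCoconeIsColimit a i Y)
    (i := op (op n)) (j := op (op n)) e 0).1 h0
  refine ⟨k.unop.unop, leOfHom f.unop.unop, ?_⟩
  refine Eq.trans ?_ (hfg.trans ?_)
  · rfl
  · exact map_zero (((localCohomology.diagram (localCohomology.idealPowersDiagram a) i ⋙
      (evaluation _ _).obj Y).map g).hom)

/-- `c` is a cocycle representing `z` -/
def LRep (Y : ModuleCat.{u} R) (i n : ℕ) (c : (qP a n).complex.X i ⟶ Y) (z : lcM a i Y) : Prop :=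
  ∃ e, ExtRep (qP a n) Y i c e ∧ (lcι a i Y n).hom e = z

variable {a}
variable {Y : ModuleCat.{u} R} {i : ℕ}

lemma LRep.exists_rep (z : lcM a i Y) : ∃ n c, LRep a Y i n c z := by
  obtain ⟨n, e, rfl⟩ := lcι_surj a i Y z
  obtain ⟨c, hc⟩ := ExtRep.exists_rep (qP a n) Y i e
  exact ⟨n, c, e, hc, rfl⟩

lemma LRep.exists_of_cocycle {n : ℕ} (c : (qP a n).complex.X i ⟶ Y)
    (hc : (qP a n).complex.d (i+1) i ≫ c = 0) : ∃ z, LRep a Y i n c z := by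
  obtain ⟨e, he⟩ := ExtRep.exists_of_cocycle (qP a n) Y i c hc
  exact ⟨_, e, he, rfl⟩

variable {n : ℕ} {c : (qP a n).complex.X i ⟶ Y} {z : lcM a i Y}

lemma LRep.cocycle (h : LRep a Y i n c z) (j : ℕ) : (qP a n).complex.d j i ≫ c = 0 := by
  obtain ⟨e, he, rfl⟩ := h
  exact he.cocycle j

lemma LRep.smul (h : LRep a Y i n c z) (r : R) : LRep a Y i n (r • c) (r • z) := by
  obtain ⟨e, he, rfl⟩ := h
  exact ⟨r • e, he.smul r, map_smul _ _ _⟩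

lemma LRep.lift (h : LRep a Y i n c z) {m : ℕ} (hm : n ≤ m) :
    LRep a Y i m ((qL a hm).f i ≫ c) z := by
  obtain ⟨e, he, rfl⟩ := h
  exact ⟨_, he.map _ _ (qL_comm a hm), congrArg (fun f => f.hom e) (lcι_w a i Y hm)⟩

lemma LRep.eq_zero (h : LRep a Y i n c z) {j : ℕ} (g : (qP a n).complex.X j ⟶ Y)
    (hg : (qP a n).complex.d i j ≫ g = c) : z = 0 := by
  obtain ⟨e, he, rfl⟩ := h
  rw [he.eq_zero_iff.2 ⟨j, g, hg⟩, map_zero]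

lemma LRep.exists_of_eq_zero (h : LRep a Y i n c 0) :
    ∃ m, ∃ h : n ≤ m, ∃ j, ∃ g : (qP a m).complex.X j ⟶ Y,
      (qP a m).complex.d i j ≫ g = (qL a h).f i ≫ c := by
  obtain ⟨e, he, h0⟩ := h
  obtain ⟨m, hm, h1⟩ := lcι_eq_zero a i Y e h0
  exact ⟨m, hm, (he.map _ _ (qL_comm a hm)).eq_zero_iff.1 h1⟩

lemma LRep.torsion (h : LRep a Y i n c z) {r : R} (hr : r ∈ a ^ n) : r • z = 0 := by
  have h0 : r • 𝟙 (qM a n) = 0 := by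
    ext x
    obtain ⟨x, rfl⟩ := Ideal.Quotient.mk_surjective x
    change Ideal.Quotient.mk (a ^ n) (r * x) = 0
    exact Ideal.Quotient.eq_zero_iff_mem.2 (Ideal.mul_mem_right _ _ hr)
  have H : Homotopy (r • 𝟙 (qP a n).complex) 0 :=
    ProjectiveResolution.liftHomotopy (0 : qM a n ⟶ qM a n) _ _ (by
      rw [← h0]
      ext : 1
      simp
      exact ((Linear.comp_smul ((qP a n).complex.X 0) (qM a n) (qM a n) ((qP a n).π.f 0) r
        (𝟙 (qM a n))).trans (congrArg (r • ·) (Category.comp_id _))).symm) (by simp)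
  have hc := H.comm i
  simp only [HomologicalComplex.zero_f, add_zero] at hc
  have h2 : r • c = ((r • 𝟙 (qP a n).complex : _ ⟶ _).f i) ≫ c := by simp
  rw [hc, Preadditive.add_comp] at h2
  have hp : prevD i H.hom ≫ c = 0 := by
    simp [prevD, h.cocycle]
  rw [hp, add_zero] at h2
  have h3 := h.smul r
  refine h3.eq_zero (j := (ComplexShape.down ℕ).next i) (H.hom _ i ≫ c) ?_
  rw [h2]
  simp [dNext]

end LC

section Shift
variable {R : Type u} [CommRing R] {a : Ideal R} {M : Type u} [AddCommGroup M] [Module R M]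

/-- the quotient map -/
abbrev qpi (x : R) (M : Type u) [AddCommGroup M] [Module R M] :
    ModuleCat.of R M ⟶ ModuleCat.of R (QuotSMulTop x M) :=
  ModuleCat.ofHom (Submodule.mkQ _)

instance (x : R) : Epi (qpi x M) := by
  rw [ModuleCat.epi_iff_surjective]
  exact Submodule.mkQ_surjective _

lemma smul_qpi (x : R) {A : ModuleCat.{u} R} (k : A ⟶ ModuleCat.of R M) :
    (x • k) ≫ qpi x M = 0 := by
  ext y
  change Submodule.Quotient.mk (x • k.hom y) = 0
  rw [Submodule.Quotient.mk_eq_zero]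
  exact Submodule.smul_mem_pointwise_smul _ _ _ trivial

lemma exists_div {x : R} (hx : IsSMulRegular M x) {A : ModuleCat.{u} R} (c : A ⟶ ModuleCat.of R M)
    (hc : c ≫ qpi x M = 0) : ∃ k : A ⟶ ModuleCat.of R M, c = x • k := by
  have h1 : ∀ y, c.hom y ∈ LinearMap.range (LinearMap.lsmul R M x) := by
    intro y
    have := congrArg (fun f => f.hom y) hc
    have h2 : Submodule.Quotient.mk (c.hom y) = (0 : QuotSMulTop x M) := this
    rw [Submodule.Quotient.mk_eq_zero, Submodule.mem_smul_pointwise_iff_exists] at h2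
    obtain ⟨b, -, hb⟩ := h2
    exact ⟨b, hb⟩
  refine ⟨ModuleCat.ofHom ((LinearEquiv.ofInjective (LinearMap.lsmul R M x) hx).symm.toLinearMap ∘ₗ
    (c.hom.codRestrict _ h1)), ?_⟩
  ext y
  have := (LinearEquiv.ofInjective (LinearMap.lsmul R M x) hx).apply_symm_apply
    (c.hom.codRestrict _ h1 y)
  exact (congrArg Subtype.val this).symm

lemma smul_cancel {x : R} (hx : IsSMulRegular M x) {A : ModuleCat.{u} R}
    {c d : A ⟶ ModuleCat.of R M} (h : x • c = x • d) : c = d := by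
  ext y
  exact hx (congrArg (fun f => f.hom y) h)

instance (n i : ℕ) : Projective ((qP a n).complex.X i) := (qP a n).projective i

/-- connecting relation -/
def LcRel (a : Ideal R) (x : R) (M : Type u) [AddCommGroup M] [Module R M] (i : ℕ)
    (z : lcM a (i+1) (ModuleCat.of R M)) (w : lcM a i (ModuleCat.of R (QuotSMulTop x M))) : Prop :=
  ∃ n, ∃ f : (qP a n).complex.X (i+1) ⟶ ModuleCat.of R M,
    ∃ g : (qP a n).complex.X i ⟶ ModuleCat.of R M,
    LRep a _ (i+1) n f z ∧ LRep a _ i n (g ≫ qpi x M) w ∧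
      x • f = (qP a n).complex.d (i+1) i ≫ g

lemma LRep.exists_succ {Y : ModuleCat.{u} R} {i n : ℕ} {c : (qP a n).complex.X (i+1) ⟶ Y}
    (h : LRep a Y (i+1) n c 0) :
    ∃ m, ∃ h : n ≤ m, ∃ g : (qP a m).complex.X i ⟶ Y,
      (qP a m).complex.d (i+1) i ≫ g = (qL a h).f (i+1) ≫ c := by
  obtain ⟨m, hm, j, g, hg⟩ := h.exists_of_eq_zero
  by_cases hj : j = i
  · subst hj
    exact ⟨m, hm, g, hg⟩
  · refine ⟨m, hm, 0, ?_⟩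
    rw [← hg, (qP a m).complex.shape (i+1) j (by simpa using hj)]
    simp

variable {x : R} {i : ℕ}

lemma LcRel.exists_left (hx : IsSMulRegular M x) (w : lcM a i (ModuleCat.of R (QuotSMulTop x M))) :
    ∃ z, LcRel a x M i z w := by
  obtain ⟨n, c, hc⟩ := LRep.exists_rep w
  set g := Projective.factorThru c (qpi x M) with hg
  have hgc : g ≫ qpi x M = c := Projective.factorThru_comp _ _
  obtain ⟨f, hf⟩ := exists_div hx ((qP a n).complex.d (i+1) i ≫ g) (by
    rw [Category.assoc, hgc, hc.cocycle])
  obtain ⟨z, hz⟩ := LRep.exists_of_cocycle (a := a) (n := n) f (by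
    apply smul_cancel hx
    rw [← Linear.comp_smul, ← hf]
    simp)
  exact ⟨z, n, f, g, hz, by rwa [hgc], hf.symm⟩

lemma LcRel.exists_right (z : lcM a (i+1) (ModuleCat.of R M)) (hz : x • z = 0) :
    ∃ w, LcRel a x M i z w := by
  obtain ⟨n, c, hc⟩ := LRep.exists_rep z
  have h1 := hc.smul x
  rw [hz] at h1
  obtain ⟨m, hm, g, hg⟩ := h1.exists_succ
  rw [Linear.comp_smul] at hg
  obtain ⟨w, hw⟩ := LRep.exists_of_cocycle (a := a) (n := m) (g ≫ qpi x M) (by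
    rw [← Category.assoc, hg, smul_qpi])
  exact ⟨w, m, _, g, hc.lift hm, hw, hg.symm⟩

lemma LcRel.left_zero (hx : IsSMulRegular M x) {z w} (h : LcRel a x M i z w) {r : R} (hr : r • w = 0) : r • z = 0 := by
  obtain ⟨n, f, g, hz, hw, hfg⟩ := h
  have h1 := hw.smul r
  rw [hr] at h1
  obtain ⟨m, hm, j, hb, hhb⟩ := h1.exists_of_eq_zero
  set h := Projective.factorThru hb (qpi x M) with hdef
  have hh : h ≫ qpi x M = hb := Projective.factorThru_comp _ _
  obtain ⟨k, hk⟩ := exists_div hx (r • ((qL a hm).f i ≫ g) - (qP a m).complex.d i j ≫ h) (by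
    rw [Preadditive.sub_comp, Category.assoc, hh, hhb]
    simp)
  refine ((hz.lift hm).smul r).eq_zero k ?_
  apply smul_cancel hx
  rw [← Linear.comp_smul, ← hk, Preadditive.comp_sub, Linear.comp_smul, smul_comm x r,
    ← Linear.comp_smul _ _ _ _ x f, hfg]
  simp

lemma LcRel.right_zero {z w} (h : LcRel a x M i z w) (h0 : ∀ y : lcM a i (ModuleCat.of R M), y = 0)
    {r : R} (hr : r • z = 0) : r • w = 0 := by
  obtain ⟨n, f, g, hz, hw, hfg⟩ := h
  have h1 := hz.smul r
  rw [hr] at h1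
  obtain ⟨m, hm, k, hk⟩ := h1.exists_succ
  obtain ⟨y, hy⟩ := LRep.exists_of_cocycle (a := a) (n := m)
    (r • ((qL a hm).f i ≫ g) - x • k) (by
    rw [Preadditive.comp_sub, Linear.comp_smul, Linear.comp_smul, hk,
      ← HomologicalComplex.Hom.comm_assoc, ← hfg]
    simp only [Linear.comp_smul]
    rw [smul_comm, sub_self])
  rw [h0 y] at hy
  obtain ⟨m', hm', j, t, ht⟩ := hy.exists_of_eq_zero
  refine (((hw.lift hm).lift hm').smul r).eq_zero (t ≫ qpi x M) ?_
  rw [← Category.assoc, ht, Preadditive.comp_sub, Preadditive.sub_comp, Linear.comp_smul,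
    Linear.comp_smul, smul_qpi]
  simp

end Shift

section DegZero
variable {R : Type u} [CommRing R] {a : Ideal R}

lemma mem_ass_iff [IsNoetherianRing R] {N : Type u} [AddCommGroup N] [Module R N] {p : Ideal R} :
    p ∈ associatedPrimes R N ↔ p.IsPrime ∧ ∃ y : N, ∀ r : R, r ∈ p ↔ r • y = 0 := by
  rw [AssociatedPrimes.mem_iff, isAssociatedPrime_iff]
  refine and_congr_right fun _ => exists_congr fun y => ?_
  rw [Ideal.ext_iff]
  simp [Submodule.mem_colon_singleton]

/-- augmentation -/
def qπ (a : Ideal R) (n : ℕ) : (qP a n).complex.X 0 ⟶ qM a n := (qP a n).π.f 0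

instance (n : ℕ) : Epi (qπ a n) := by
  unfold qπ
  exact inferInstanceAs (Epi ((qP a n).π.f 0))

lemma qL_qπ {n m : ℕ} (h : n ≤ m) : (qL a h).f 0 ≫ qπ a n = qπ a m ≫ qT a h := qL_comm a h

lemma d_qπ (n j : ℕ) : (qP a n).complex.d j 0 ≫ qπ a n = 0 := by
  by_cases hj : j = 1
  · subst hj
    exact (qP a n).complex_d_comp_π_f_zero
  · rw [(qP a n).complex.shape j 0 (by simpa using fun h => hj h.symm), zero_comp]

lemma exists_desc {n : ℕ} {Y : ModuleCat.{u} R} (c : (qP a n).complex.X 0 ⟶ Y)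
    (hc : (qP a n).complex.d 1 0 ≫ c = 0) : ∃ φ : qM a n ⟶ Y, qπ a n ≫ φ = c := by
  have := (qP a n).isColimitCokernelCofork
  exact ⟨this.desc (CokernelCofork.ofπ c hc), this.fac (CokernelCofork.ofπ c hc) .one⟩

/-- the generator of `R / a^n` -/
def qone (a : Ideal R) (n : ℕ) : qM a n := Ideal.Quotient.mk (a ^ n) 1

lemma qhom_eq_zero {n : ℕ} {Y : ModuleCat.{u} R} (φ : qM a n ⟶ Y) (h : φ.hom (qone a n) = 0) :
    φ = 0 := by
  ext x
  obtain ⟨x, rfl⟩ := Ideal.Quotient.mk_surjective x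
  have h1 : (Ideal.Quotient.mk (a ^ n) x : qM a n) = x • qone a n := by
    change Ideal.Quotient.mk (a ^ n) x = Ideal.Quotient.mk (a ^ n) (x * 1)
    rw [mul_one]
  have h2 : φ.hom (x • qone a n) = 0 := by rw [map_smul, h, smul_zero]
  exact (congrArg φ.hom h1).trans h2

lemma LRep.zero_iff {Y : ModuleCat.{u} R} {n : ℕ} {φ : qM a n ⟶ Y} {z : lcM a 0 Y}
    (h : LRep a Y 0 n (qπ a n ≫ φ) z) (r : R) : r • z = 0 ↔ r • φ.hom (qone a n) = 0 := by
  constructor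
  · intro hr
    have h1 := h.smul r
    rw [hr] at h1
    obtain ⟨m, hm, j, g, hg⟩ := h1.exists_of_eq_zero
    rw [(qP a m).complex.shape 0 j (by simp), zero_comp, ← Linear.comp_smul,
      ← Category.assoc, qL_qπ, Category.assoc, ← comp_zero (f := qπ a m)] at hg
    have h2 := (cancel_epi _).1 hg
    exact (congrArg (fun f => f.hom (qone a m)) h2).symm
  · intro hr
    have h1 : r • φ = 0 := qhom_eq_zero _ hr
    refine (h.smul r).eq_zero (j := 0) 0 ?_
    rw [← Linear.comp_smul, h1]
    simp

lemma le_of_ass [IsNoetherianRing R] {Y : ModuleCat.{u} R} {i : ℕ} {p : Ideal R} (hp : p.IsPrime)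
    {z : lcM a i Y} (hz : ∀ r : R, r ∈ p ↔ r • z = 0) : a ≤ p := by
  obtain ⟨n, c, hc⟩ := LRep.exists_rep z
  have : a ^ n ≤ p := fun r hr => (hz r).2 (hc.torsion hr)
  exact hp.le_of_pow_le this

lemma ass_zero [IsNoetherianRing R] (N : Type u) [AddCommGroup N] [Module R N] (p : Ideal R) :
    p ∈ associatedPrimes R (lcM a 0 (ModuleCat.of R N)) ↔ p ∈ associatedPrimes R N ∧ a ≤ p := by
  rw [mem_ass_iff, mem_ass_iff]
  constructor
  · rintro ⟨hp, z, hz⟩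
    refine ⟨⟨hp, ?_⟩, le_of_ass hp hz⟩
    obtain ⟨n, c, hc⟩ := LRep.exists_rep z
    obtain ⟨φ, rfl⟩ := exists_desc c (hc.cocycle 1)
    exact ⟨φ.hom (qone a n), fun r => (hz r).trans (hc.zero_iff r)⟩
  · rintro ⟨⟨hp, y, hy⟩, hap⟩
    refine ⟨hp, ?_⟩
    let φ : qM a 1 ⟶ ModuleCat.of R N := ModuleCat.ofHom
      (Submodule.liftQ (a ^ 1) (LinearMap.toSpanSingleton R N y) (by
        intro r hr
        rw [pow_one] at hr
        simpa using (hy r).1 (hap hr)))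
    have hφ : φ.hom (qone a 1) = y := by
      change (1 : R) • y = y
      exact one_smul _ _
    obtain ⟨z, hz⟩ := LRep.exists_of_cocycle (a := a) (n := 1) (i := 0) (qπ a 1 ≫ φ) (by
      rw [← Category.assoc, d_qπ, zero_comp])
    refine ⟨z, fun r => ?_⟩
    rw [hz.zero_iff, hφ, hy]

lemma lc_zero_of_smul {Y : ModuleCat.{u} R} {i : ℕ} {x : R} (hxa : x ∈ a)
    (h : ∀ z : lcM a i Y, x • z = 0 → z = 0) (z : lcM a i Y) : z = 0 := by
  obtain ⟨n, c, hc⟩ := LRep.exists_rep z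
  have h1 : x ^ n • z = 0 := hc.torsion (Ideal.pow_mem_pow hxa n)
  clear hc
  induction n with
  | zero => simpa using h1
  | succ n ih =>
    exact ih 0 (h _ (by rw [smul_smul, ← pow_succ', h1]))

open RingTheory.Sequence in
lemma lc_vanish (rs : List R) (hra : ∀ r ∈ rs, r ∈ a) : ∀ (M : Type u) [AddCommGroup M] [Module R M]
    (_ : IsWeaklyRegular M rs) (i : ℕ) (_ : i < rs.length) (z : lcM a i (ModuleCat.of R M)),
    z = 0 := by
  induction rs with
  | nil => intro M _ _ _ i hi; simp at hi
  | cons x rs ih =>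
    intro M _ _ hM i hi
    rw [isWeaklyRegular_cons_iff] at hM
    apply lc_zero_of_smul (hra x (by simp))
    intro z hz
    cases i with
    | zero =>
      obtain ⟨n, c, hc⟩ := LRep.exists_rep z
      have h1 := hc.smul x
      rw [hz] at h1
      obtain ⟨m, hm, j, g, hg⟩ := h1.exists_of_eq_zero
      rw [(qP a m).complex.shape 0 j (by simp), zero_comp, Linear.comp_smul] at hg
      have h2 : (qL a hm).f 0 ≫ c = 0 := smul_cancel hM.1 (by rw [← hg, smul_zero])
      exact (hc.lift hm).eq_zero (j := 0) 0 (by rw [h2, comp_zero])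
    | succ i =>
      obtain ⟨w, hw⟩ := LcRel.exists_right z hz
      have hw0 : w = 0 := ih (fun r hr => hra r (by simp [hr])) _ hM.2 i (by simpa using hi) w
      have := hw.left_zero hM.1 (r := 1) (by rw [hw0, smul_zero])
      rwa [one_smul] at this

open RingTheory.Sequence in
lemma ass_lc [IsNoetherianRing R] (p : Ideal R) (rs : List R) (hra : ∀ r ∈ rs, r ∈ a) :
    ∀ (M : Type u) [AddCommGroup M] [Module R M] (_ : IsWeaklyRegular M rs),
    p ∈ associatedPrimes R (lcM a rs.length (ModuleCat.of R M)) ↔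
      p ∈ associatedPrimes R (M ⧸ (Ideal.ofList rs • ⊤ : Submodule R M)) ∧ a ≤ p := by
  induction rs with
  | nil =>
    intro M _ _ _
    rw [LinearEquiv.AssociatedPrimes.eq
      (Submodule.quotEquivOfEqBot (Ideal.ofList [] • ⊤ : Submodule R M) (by simp))]
    exact ass_zero M p
  | cons x rs ih =>
    intro M _ _ hM
    have hM0 := hM
    rw [isWeaklyRegular_cons_iff] at hM
    rw [LinearEquiv.AssociatedPrimes.eq
      (Submodule.quotOfListConsSMulTopEquivQuotSMulTopInner M x rs),
      ← ih (fun r hr => hra r (by simp [hr])) _ hM.2, mem_ass_iff, mem_ass_iff]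
    have h0 := lc_vanish (x :: rs) hra M hM0 rs.length (by simp)
    constructor
    · rintro ⟨hp, z, hz⟩
      obtain ⟨w, hw⟩ := LcRel.exists_right z ((hz x).1 (le_of_ass hp hz (hra x (by simp))))
      exact ⟨hp, w, fun r => (hz r).trans ⟨hw.right_zero h0, hw.left_zero hM.1⟩⟩
    · rintro ⟨hp, w, hw⟩
      obtain ⟨z, hz⟩ := LcRel.exists_left hM.1 w
      exact ⟨hp, z, fun r => (hw r).trans ⟨hz.left_zero hM.1, hz.right_zero h0⟩⟩

end DegZero

section Linked
variable {R : Type u} [CommRing R] [IsNoetherianRing R]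
variable {M : Type u} [AddCommGroup M] [Module R M]

lemma mem_modColon (N : Submodule R M) (b : Ideal R) (y : M) :
    y ∈ Submodule.modColon N b ↔ ∀ r ∈ b, r • y ∈ N := by
  simp [Submodule.modColon, Submodule.mem_iInf]

lemma ass_modColon (N : Submodule R M) (b : Ideal R) :
    associatedPrimes R (M ⧸ Submodule.modColon N b) ⊆ associatedPrimes R (M ⧸ N) := by
  intro p
  rw [mem_ass_iff, mem_ass_iff]
  rintro ⟨hp, y, hy⟩
  obtain ⟨y, rfl⟩ := Submodule.Quotient.mk_surjective _ y
  refine ⟨hp, ?_⟩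
  obtain ⟨s, rfl⟩ := IsNoetherian.noetherian b
  have hy' : ∀ r, r ∈ p ↔ ∀ t ∈ Ideal.span (s : Set R), t • r • y ∈ N := by
    intro r
    rw [hy, ← Submodule.Quotient.mk_smul, Submodule.Quotient.mk_eq_zero, mem_modColon]
  let J : R → Ideal R := fun t => LinearMap.ker (LinearMap.toSpanSingleton R (M ⧸ N)
    (Submodule.Quotient.mk (t • y)))
  have hJ : ∀ t r, r ∈ J t ↔ t • r • y ∈ N := by
    intro t r
    simp only [J, LinearMap.mem_ker, LinearMap.toSpanSingleton_apply]
    rw [← Submodule.Quotient.mk_smul, Submodule.Quotient.mk_eq_zero, smul_comm]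
  have hinf : s.inf J ≤ p := by
    intro r hr
    rw [hy']
    intro t ht
    rw [Submodule.mem_finsetInf] at hr
    induction ht using Submodule.span_induction with
    | mem t ht => exact (hJ t r).1 (hr t ht)
    | zero => simp
    | add t t' _ _ h h' => rw [add_smul]; exact N.add_mem h h'
    | smul c t _ h => rw [smul_assoc]; exact N.smul_mem _ h
  obtain ⟨t, ht, htp⟩ := (Ideal.IsPrime.inf_le' hp).1 hinf
  refine ⟨Submodule.Quotient.mk (t • y), fun r => ⟨fun hr => ?_, fun hr => htp hr⟩⟩
  exact (hJ t r).2 ((hy' r).1 hr t (Ideal.subset_span ht))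

lemma radical_ann [Module.Finite R M] (a : Ideal R) :
    (Module.annihilator R (M ⧸ (a • ⊤ : Submodule R M))).radical ≤
      (a + Module.annihilator R M).radical := by
  have h := Module.support_quotient (R := R) (M := M) a
  rw [Module.support_eq_zeroLocus, Module.support_eq_zeroLocus, ← PrimeSpectrum.zeroLocus_sup] at h
  rw [← PrimeSpectrum.vanishingIdeal_zeroLocus_eq_radical,
    ← PrimeSpectrum.vanishingIdeal_zeroLocus_eq_radical, h, Submodule.add_eq_sup, sup_comm a]

end Linked

variable {R : Type u} [CommRing R] [IsNoetherianRing R]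
variable {M : Type u} [AddCommGroup M] [Module R M] [Module.Finite R M] [Nontrivial M]

theorem stmt15 (a : Ideal R) (h : ∃ I b, Ideal.IsLinkedBy M I a b) :
    (a + Module.annihilator R M).radical =
      sInf (associatedPrimes R
        ↥((localCohomology a (gradeM a M)).obj (ModuleCat.of R M))) := by
  obtain ⟨I, b, ⟨rs, hreg, rfl⟩, hI, haM, -, -, hab⟩ := h
  have hra : ∀ r ∈ rs, r ∈ a := fun r hr => (hI (Ideal.subset_span hr)).1
  have hass := fun p => ass_lc (a := a) p rs hra M hreg.toIsWeaklyRegular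
  have hsub : ∀ p ∈ associatedPrimes R (M ⧸ (a • ⊤ : Submodule R M)),
      p ∈ associatedPrimes R (lcM a rs.length (ModuleCat.of R M)) := by
    intro p hp
    rw [hass]
    refine ⟨?_, ?_⟩
    · rw [← hab] at hp
      exact ass_modColon _ _ hp
    · refine le_trans ?_ (le_of_eq_of_le Submodule.annihilator_top.symm
        (IsAssociatedPrime.annihilator_le hp))
      intro r hr
      rw [Module.mem_annihilator]
      intro y
      obtain ⟨y, rfl⟩ := Submodule.Quotient.mk_surjective _ y
      rw [← Submodule.Quotient.mk_smul, Submodule.Quotient.mk_eq_zero]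
      exact Submodule.smul_mem_smul hr trivial
  have hgrade : gradeM a M = rs.length := by
    refine IsGreatest.csSup_eq ⟨⟨rs, rfl, hra, hreg⟩, ?_⟩
    rintro n ⟨rs', rfl, hra', hreg'⟩
    by_contra! hlt
    have hv := lc_vanish rs' hra' M hreg'.toIsWeaklyRegular rs.length hlt
    have : Nontrivial (M ⧸ (a • ⊤ : Submodule R M)) := Submodule.Quotient.nontrivial_iff.2 haM
    obtain ⟨p, hp⟩ := associatedPrimes.nonempty R (M ⧸ (a • ⊤ : Submodule R M))
    obtain ⟨hp', z, hz⟩ := mem_ass_iff.1 (hsub p hp)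
    exact hp'.ne_top ((Ideal.eq_top_iff_one _).2 ((hz 1).2 (by rw [hv z, smul_zero])))
  rw [hgrade]
  apply le_antisymm
  · refine le_sInf fun p hp => ?_
    obtain ⟨hp1, hp2⟩ := (hass p).1 hp
    rw [hp1.isPrime.radical_le_iff]
    refine sup_le hp2 (le_trans ?_ (le_of_eq_of_le Submodule.annihilator_top.symm
      (IsAssociatedPrime.annihilator_le hp1)))
    exact LinearMap.annihilator_le_of_surjective (Submodule.mkQ _) (Submodule.mkQ_surjective _)
  · refine le_trans ?_ (radical_ann a)
    rw [← Ideal.sInf_minimalPrimes]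
    exact sInf_le_sInf fun p hp => hsub p
      (Module.associatedPrimes.minimalPrimes_annihilator_subset_associatedPrimes R _ hp)
end
end

section
/- Let (R, m) be a Noetherian local ring, M a nonzero finitely generated R-module, x_1, …, x_t an M-regular sequence, and set n = dim M. If H^n_p(M) = 0 for every p ∈ Ass_R(M/(x_1, …, x_t)M), then H^n_a(M) = 0 for every ideal a ⊇ (x_1, …, x_t) with grade_M(a) = t. -/
universe u

open RingTheory.Sequence CategoryTheory

noncomputable section

namespace LCBridge
section LCAll
open CategoryTheory Limits Opposite

section PB
variable {R : Type u} [CommRing R]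

def opC (C : ChainComplex (ModuleCat.{u} R) ℕ) (Y : ModuleCat.{u} R) :
    ChainComplex (ModuleCat.{u} R)ᵒᵖ ℕ :=
  ((((linearYoneda R (ModuleCat.{u} R)).obj Y).rightOp.mapHomologicalComplex _).obj C)

def Rel (C : ChainComplex (ModuleCat.{u} R) ℕ) (Y : ModuleCat.{u} R) (n : ℕ)
    (f : C.X n ⟶ Y) (z : ((opC C Y).homology n).unop) : Prop :=
  ∃ c : ((opC C Y).opcycles n).unop, ((opC C Y).pOpcycles n).unop c = f ∧
    ((opC C Y).homologyι n).unop c = z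

lemma Rel.zero_iff {C : ChainComplex (ModuleCat.{u} R) ℕ} {Y : ModuleCat.{u} R} {n : ℕ}
    {f : C.X n ⟶ Y} {z : ((opC C Y).homology n).unop} (h : Rel C Y n f z) :
    z = 0 ↔ ∃ g : C.X ((ComplexShape.down ℕ).next n) ⟶ Y, f = C.d n _ ≫ g := by
  obtain ⟨c, hf, hz⟩ := h
  set j := (ComplexShape.down ℕ).next n with hj
  have hS := (HomologicalComplex.homologyIsKernel (opC C Y) n j hj.symm)
  have hE : (ShortComplex.mk ((opC C Y).homologyι n) ((opC C Y).fromOpcycles n j)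
    (by simp)).Exact := ShortComplex.exact_of_f_is_kernel _ hS
  have hE' := hE.unop
  rw [ShortComplex.moduleCat_exact_iff] at hE'
  have hpf : ∀ g : ((opC C Y).X j).unop,
      ((opC C Y).pOpcycles n).unop (((opC C Y).fromOpcycles n j).unop g) =
        (((opC C Y).d n j).unop g) := by
    intro g
    rw [← (opC C Y).p_fromOpcycles n j]
    rfl
  have hinj : Function.Injective (((opC C Y).pOpcycles n).unop) :=
    (ModuleCat.mono_iff_injective _).1 inferInstance
  constructor
  · rintro rfl
    obtain ⟨g, hg⟩ := hE' c hz
    refine ⟨g, ?_⟩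
    exact hf.symm.trans ((congrArg _ hg.symm).trans (hpf g))
  · rintro ⟨g, hg⟩
    have : c = ((opC C Y).fromOpcycles n j).unop g := by
      apply hinj
      exact (hf.trans hg).trans (hpf g).symm
    rw [← hz, this]
    have h2 : (opC C Y).homologyι n ≫ (opC C Y).fromOpcycles n j = 0 := by simp
    change ((opC C Y).homologyι n ≫ (opC C Y).fromOpcycles n j).unop g = 0
    rw [h2]
    rfl

lemma Rel.exists {C : ChainComplex (ModuleCat.{u} R) ℕ} {Y : ModuleCat.{u} R} {n : ℕ}
    (z : ((opC C Y).homology n).unop) :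
    ∃ f : C.X n ⟶ Y, C.d (n+1) n ≫ f = 0 ∧ Rel C Y n f z := by
  have hs : Function.Surjective (((opC C Y).homologyι n).unop) :=
    (ModuleCat.epi_iff_surjective _).1 inferInstance
  obtain ⟨c, hc⟩ := hs z
  refine ⟨((opC C Y).pOpcycles n).unop c, ?_, c, rfl, hc⟩
  have h2 : (opC C Y).d (n+1) n ≫ (opC C Y).pOpcycles n = 0 := by simp
  change ((opC C Y).d (n+1) n ≫ (opC C Y).pOpcycles n).unop c = 0
  rw [h2]
  rfl

lemma Rel.exists_z {C : ChainComplex (ModuleCat.{u} R) ℕ} {Y : ModuleCat.{u} R} {n : ℕ}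
    (f : C.X n ⟶ Y) (hf : C.d (n+1) n ≫ f = 0) : ∃ z, Rel C Y n f z := by
  have hE : (ShortComplex.mk ((opC C Y).d (n+1) n) ((opC C Y).pOpcycles n)
    (by simp)).Exact := ShortComplex.exact_of_g_is_cokernel _
      ((opC C Y).opcyclesIsCokernel (n+1) n (by simp))
  have hE' := hE.unop
  rw [ShortComplex.moduleCat_exact_iff] at hE'
  obtain ⟨c, hc⟩ := hE' f hf
  exact ⟨_, c, hc, rfl⟩

lemma Rel.map {C D : ChainComplex (ModuleCat.{u} R) ℕ} {Y : ModuleCat.{u} R} {n : ℕ}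
    (φ : C ⟶ D)
    {f : D.X n ⟶ Y} {z : ((opC D Y).homology n).unop} (h : Rel D Y n f z) :
    Rel C Y n (φ.f n ≫ f) ((((((linearYoneda R (ModuleCat.{u} R)).obj Y).rightOp.mapHomologicalComplex _) ⋙
       HomologicalComplex.homologyFunctor _ _ n).map φ).unop z) := by
  obtain ⟨c, hf, hz⟩ := h
  let ψ : opC C Y ⟶ opC D Y :=
    (((linearYoneda R (ModuleCat.{u} R)).obj Y).rightOp.mapHomologicalComplex _).map φ
  refine ⟨(HomologicalComplex.opcyclesMap ψ n).unop c, ?_, ?_⟩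
  · change ((opC C Y).pOpcycles n ≫ HomologicalComplex.opcyclesMap ψ n).unop c = _
    rw [HomologicalComplex.p_opcyclesMap, ← hf]
    rfl
  · change ((opC C Y).homologyι n ≫ HomologicalComplex.opcyclesMap ψ n).unop c = _
    rw [← HomologicalComplex.homologyι_naturality, ← hz]
    rfl

open Abelian in
lemma extMk_eq_zero_iff' {X Y : ModuleCat.{u} R} (P : ProjectiveResolution X) (n : ℕ)
    (f : P.complex.X n ⟶ Y) (hf : P.complex.d (n+1) n ≫ f = 0) :
    P.extMk f (n+1) rfl hf = 0 ↔
      ∃ g : P.complex.X ((ComplexShape.down ℕ).next n) ⟶ Y, f = P.complex.d n _ ≫ g := by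
  cases n with
  | succ p =>
    rw [P.extMk_eq_zero_iff f _ rfl hf p rfl]
    have : (ComplexShape.down ℕ).next (p+1) = p := by simp
    rw [this]
    exact exists_congr fun _ => eq_comm
  | zero =>
    have h1 : (∃ g : P.complex.X ((ComplexShape.down ℕ).next 0) ⟶ Y, f = P.complex.d 0 _ ≫ g)
        ↔ f = 0 := by
      constructor
      · rintro ⟨g, rfl⟩
        rw [P.complex.shape]
        · simp
        · simp
      · rintro rfl
        exact ⟨0, by simp⟩
    rw [h1]
    constructor
    · intro h
      rw [← P.extEquivCohomologyClass.apply_eq_iff_eq,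
        ProjectiveResolution.extEquivCohomologyClass_extMk,
        ProjectiveResolution.extEquivCohomologyClass_zero,
        CochainComplex.HomComplex.CohomologyClass.mk_eq_zero_iff,
        CochainComplex.HomComplex.Cocycle.toSingleMk_mem_coboundaries_iff _ _ _ _ _ 1 (by lia)] at h
      obtain ⟨g, hg⟩ := h
      have hz : IsZero (P.cochainComplex.X 1) :=
        P.cochainComplex.isZero_of_isStrictlyLE 0 1 (by lia)
      rw [hz.eq_of_src g 0, comp_zero] at hg
      rw [← cancel_epi (P.cochainComplexXIso (-(0:ℕ)) 0 rfl).hom, comp_zero]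
      exact hg.symm
    · rintro rfl
      simp

open Abelian

/-- Comparison relation between the `Ext` computed by projective resolutions and the derived one. -/
def Cmp {X Y : ModuleCat.{u} R} {n : ℕ} (z : ((_root_.Ext R (ModuleCat.{u} R) n).obj (op X)).obj Y)
    (ξ : Abelian.Ext X Y n) : Prop :=
  ∃ (f : (projectiveResolution X).complex.X n ⟶ Y)
    (hf : (projectiveResolution X).complex.d (n+1) n ≫ f = 0)
    (z' : ((opC (projectiveResolution X).complex Y).homology n).unop),
    Rel _ Y n f z' ∧ (projectiveResolution X).extMk f (n+1) rfl hf = ξ ∧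
    z = ((projectiveResolution X).isoLeftDerivedObj
      ((linearYoneda R (ModuleCat.{u} R)).obj Y).rightOp n).hom.unop z'

lemma Cmp.exists_right {X Y : ModuleCat.{u} R} {n : ℕ}
    (z : ((_root_.Ext R (ModuleCat.{u} R) n).obj (op X)).obj Y) : ∃ ξ, Cmp z ξ := by
  let e := (projectiveResolution X).isoLeftDerivedObj
      ((linearYoneda R (ModuleCat.{u} R)).obj Y).rightOp n
  obtain ⟨f, hf, h⟩ := Rel.exists (C := (projectiveResolution X).complex) (Y := Y) (n := n)
    (e.inv.unop z)
  refine ⟨_, f, hf, _, h, rfl, ?_⟩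
  change z = (e.hom ≫ e.inv).unop z
  rw [e.hom_inv_id]
  rfl

lemma Cmp.exists_left {X Y : ModuleCat.{u} R} {n : ℕ}
    (ξ : Abelian.Ext X Y n) :
    ∃ z : ((_root_.Ext R (ModuleCat.{u} R) n).obj (op X)).obj Y, Cmp z ξ := by
  obtain ⟨f, hf, rfl⟩ := (projectiveResolution X).extMk_surjective ξ (n+1) rfl
  obtain ⟨z, hz⟩ := Rel.exists_z f hf
  exact ⟨_, f, hf, z, hz, rfl, rfl⟩

lemma Cmp.zero_iff {X Y : ModuleCat.{u} R} {n : ℕ}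
    {z : ((_root_.Ext R (ModuleCat.{u} R) n).obj (op X)).obj Y}
    {ξ : Abelian.Ext X Y n} (h : Cmp z ξ) : z = 0 ↔ ξ = 0 := by
  obtain ⟨f, hf, z', h1, rfl, rfl⟩ := h
  rw [extMk_eq_zero_iff', ← h1.zero_iff]
  let e := (projectiveResolution X).isoLeftDerivedObj
      ((linearYoneda R (ModuleCat.{u} R)).obj Y).rightOp n
  constructor
  · intro h
    have h2 := congrArg (e.inv.unop) h
    have h3 : (e.inv ≫ e.hom).unop z' = 0 := h2.trans (map_zero _)
    rw [e.inv_hom_id] at h3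
    exact h3
  · rintro rfl
    exact map_zero _

lemma Cmp.map {X X' Y : ModuleCat.{u} R} {n : ℕ} (g : X' ⟶ X)
    {z : ((_root_.Ext R (ModuleCat.{u} R) n).obj (op X)).obj Y}
    {ξ : Abelian.Ext X Y n} (h : Cmp z ξ) :
    Cmp (((_root_.Ext R (ModuleCat.{u} R) n).map g.op).app Y z)
      ((Ext.mk₀ g).comp ξ (zero_add n)) := by
  obtain ⟨f, hf, z', h1, rfl, rfl⟩ := h
  let P := projectiveResolution X'
  let Q := projectiveResolution X
  let φ := ProjectiveResolution.lift g P Q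
  have hc : φ.f 0 ≫ Q.π.f 0 = P.π.f 0 ≫ g := by
    have := ProjectiveResolution.lift_commutes_zero g P Q
    simpa [φ] using this
  let Φ : ProjectiveResolution.Hom P Q g := ⟨φ, by simpa using! hc⟩
  rw [ProjectiveResolution.mk₀_comp_extMk f (n+1) rfl hf Φ]
  refine ⟨_, _, _, h1.map φ, rfl, ?_⟩
  have := ProjectiveResolution.isoLeftDerivedObj_hom_naturality g P Q φ hc
    ((linearYoneda R (ModuleCat.{u} R)).obj Y).rightOp n
  have h2 := congrArg (fun t => t.unop z') this
  exact h2

/-- The transition maps `R/I → R/J`. -/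
def tr {I J : Ideal R} (h : I ≤ J) : ModuleCat.of R (R ⧸ I) ⟶ ModuleCat.of R (R ⧸ J) :=
  ModuleCat.ofHom (Submodule.mapQ I J LinearMap.id h)

/-- Vanishing of local cohomology, elementwise. -/
def Van (a : Ideal R) (n : ℕ) (N : ModuleCat.{u} R) : Prop :=
  ∀ (k : ℕ) (ξ : Abelian.Ext (ModuleCat.of R (R ⧸ a ^ k)) N n),
    ∃ (l : ℕ) (h : a ^ l ≤ a ^ k), (Ext.mk₀ (tr h)).comp ξ (zero_add n) = 0

theorem van_iff (a : Ideal R) (n : ℕ) (N : ModuleCat.{u} R) :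
    Subsingleton ↥((localCohomology a n).obj N) ↔ Van a n N := by
  let D := localCohomology.diagram (localCohomology.idealPowersDiagram a) n
  let F : ℕᵒᵖᵒᵖ ⥤ ModuleCat.{u} R := D ⋙ (evaluation _ _).obj N
  let e : (localCohomology a n).obj N ≅ colimit F := colimitObjIsoColimitCompEvaluation D N
  have h1 : Subsingleton ↥((localCohomology a n).obj N) ↔ Subsingleton ↥(colimit F) :=
    e.toLinearEquiv.toEquiv.subsingleton_congr
  rw [h1]
  have hp : PreservesFilteredColimitsOfSize.{0, 0} (forget (ModuleCat.{u} R)) :=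
    preservesFilteredColimitsOfSize_shrink.{0, u, 0, u} _
  have : PreservesColimit F (forget (ModuleCat.{u} R)) :=
    (hp.preserves_filtered_colimits ℕᵒᵖᵒᵖ).preservesColimit
  constructor
  · intro hs k ξ
    obtain ⟨z, hz⟩ := Cmp.exists_left ξ
    obtain ⟨j, i, h⟩ := Concrete.colimit_rep_eq_zero (R := R) F (j := op (op k)) z
      (Subsingleton.elim _ _)
    have hk : k ≤ j.unop.unop := leOfHom i.unop.unop
    refine ⟨j.unop.unop, Ideal.pow_le_pow_right hk, ?_⟩
    have := hz.map (tr (Ideal.pow_le_pow_right (I := a) hk))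
    exact this.zero_iff.1 h
  · intro hv
    refine subsingleton_of_forall_eq 0 fun x => ?_
    obtain ⟨j, z, rfl⟩ := Concrete.colimit_exists_rep F x
    obtain ⟨ξ, hξ⟩ := Cmp.exists_right (X := ModuleCat.of R (R ⧸ a ^ j.unop.unop)) (Y := N) z
    obtain ⟨l, hl, h0⟩ := hv _ ξ
    let m := max l j.unop.unop
    have hm : a ^ m ≤ a ^ l := Ideal.pow_le_pow_right (le_max_left _ _)
    have hm2 : j.unop.unop ≤ m := le_max_right _ _
    have h2 : (Ext.mk₀ (tr (Ideal.pow_le_pow_right (I := a) hm2))).comp ξ (zero_add n) = 0 := by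
      have : tr (Ideal.pow_le_pow_right (I := a) hm2) = tr hm ≫ tr hl := by
        ext; rfl
      rw [this, ← Ext.mk₀_comp_mk₀_assoc, h0, Ext.comp_zero]
    have h3 := (hξ.map _).zero_iff.2 h2
    let i : j ⟶ op (op m) := (homOfLE hm2).op.op
    have h4 : F.map i z = 0 := h3
    rw [← colimit.w F i]
    change colimit.ι F _ (F.map i z) = 0
    rw [h4, map_zero]

end PB

section PC
variable {R : Type u} [CommRing R]

/-- The `a`-power torsion submodule. -/
def Gam (a : Ideal R) (E : Type u) [AddCommGroup E] [Module R E] : Submodule R E where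
  carrier := {x | ∃ k : ℕ, ∀ r ∈ a ^ k, r • x = 0}
  zero_mem' := ⟨0, by simp⟩
  add_mem' := by
    rintro x y ⟨k, hk⟩ ⟨l, hl⟩
    refine ⟨k + l, fun r hr => ?_⟩
    rw [smul_add, hk r (Ideal.pow_le_pow_right (Nat.le_add_right _ _) hr),
      hl r (Ideal.pow_le_pow_right (Nat.le_add_left _ _) hr), add_zero]
  smul_mem' := by
    rintro s x ⟨k, hk⟩
    refine ⟨k, fun r hr => ?_⟩
    rw [smul_comm, hk r hr, smul_zero]

lemma mem_Gam {a : Ideal R} {E : Type u} [AddCommGroup E] [Module R E] {x : E} :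
    x ∈ Gam a E ↔ ∃ k : ℕ, ∀ r ∈ a ^ k, r • x = 0 := Iff.rfl

lemma baer_ext {E A B : Type u} [AddCommGroup E] [Module R E] [AddCommGroup A] [Module R A]
    [AddCommGroup B] [Module R B] (hE : Module.Baer R E) (φ : A →ₗ[R] B) (f : A →ₗ[R] E)
    (h : LinearMap.ker φ ≤ LinearMap.ker f) : ∃ g : B →ₗ[R] E, ∀ x, g (φ x) = f x := by
  obtain ⟨g, hg⟩ := Module.Baer.extension_property hE
    ((LinearMap.ker φ).liftQ φ le_rfl) (by
      rw [← LinearMap.ker_eq_bot, Submodule.ker_liftQ_eq_bot _ _ _ le_rfl])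
    ((LinearMap.ker φ).liftQ f h)
  refine ⟨g, fun x => ?_⟩
  exact LinearMap.congr_fun hg (Submodule.Quotient.mk x)

lemma baer_Gam [IsNoetherianRing R] (a : Ideal R) {E : Type u} [AddCommGroup E] [Module R E]
    (hE : Module.Baer R E) : Module.Baer R (Gam a E) := by
  intro I f
  let T : ℕ →o Submodule R I :=
    { toFun := fun c =>
        { carrier := {x | ∀ r ∈ a ^ c, r • f x = 0}
          zero_mem' := by simp
          add_mem' := by
            intro x y hx hy r hr
            rw [map_add, smul_add, hx r hr, hy r hr, add_zero]
          smul_mem' := by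
            intro s x hx r hr
            rw [map_smul, smul_comm, hx r hr, smul_zero] }
      monotone' := by
        intro i j hij x hx r hr
        exact hx r (Ideal.pow_le_pow_right hij hr) }
  obtain ⟨c, hc⟩ := monotone_stabilizes_iff_noetherian.2 (inferInstance : IsNoetherian R I) T
  have hkill : ∀ x : I, ∀ r ∈ a ^ c, r • f x = 0 := by
    intro x
    obtain ⟨d, hd⟩ := (f x).2
    have hx : x ∈ T (max c d) := by
      intro r hr
      apply Subtype.ext
      exact hd r (Ideal.pow_le_pow_right (le_max_right _ _) hr)
    rw [← hc _ (le_max_left _ _)] at hx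
    exact hx
  obtain ⟨k, hk⟩ := Ideal.exists_pow_inf_eq_pow_smul a I
  have hle : a ^ (k + c) ⊓ I ≤ (LinearMap.ker f).map I.subtype := by
    have h1 := hk (k + c) (Nat.le_add_right _ _)
    rw [Nat.add_sub_cancel_left] at h1
    have h2 : a ^ (k + c) ⊓ I = a ^ c • (a ^ k • ⊤ ⊓ I) := by
      rw [← h1]; congr 1; simp
    rw [h2, Submodule.smul_le]
    intro r hr x hx
    refine ⟨r • ⟨x, hx.2⟩, ?_, rfl⟩
    exact (map_smul f _ _).trans (hkill _ r hr)
  obtain ⟨g, hg⟩ := baer_ext hE ((Submodule.mkQ (a ^ (k + c))).comp I.subtype)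
    ((Gam a E).subtype.comp f) (by
      intro x hx
      have hx1 : (x : R) ∈ a ^ (k + c) := by
        exact (Submodule.Quotient.mk_eq_zero _).1 hx
      obtain ⟨y, hy, hyx⟩ := hle ⟨hx1, x.2⟩
      have : y = x := Subtype.ext hyx
      subst this
      have hy' : f y = 0 := hy
      simp [hy'])
  refine ⟨LinearMap.codRestrict (Gam a E) (g.comp (Submodule.mkQ _)) ?_, ?_⟩
  · intro x
    refine ⟨k + c, fun r hr => ?_⟩
    rw [LinearMap.comp_apply, ← map_smul, ← map_smul]
    have : (a ^ (k + c)).mkQ (r • x) = 0 := by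
      rw [Submodule.mkQ_apply, Submodule.Quotient.mk_eq_zero]
      exact Ideal.mul_mem_right _ _ hr
    rw [this, map_zero]
  · intro x hx
    apply Subtype.ext
    exact hg ⟨x, hx⟩

lemma baer_of_injective (E : ModuleCat.{u} R) [Injective E] : Module.Baer R E := by
  have : Module.Injective R E := Module.injective_module_of_injective_object R E
  exact Module.Baer.of_injective this

lemma injective_of_baer {E : Type u} [AddCommGroup E] [Module R E] (h : Module.Baer R E) :
    Injective (ModuleCat.of R E) := by
  have : Module.Injective R E := h.injective
  exact Module.injective_object_of_injective_module R E

open Abelian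

variable {N N' : ModuleCat.{u} R} {n : ℕ}

/-- Restriction of `Ext` classes along `R/I → R/J`. -/
def rs {I J : Ideal R} (h : I ≤ J) (ξ : Abelian.Ext (ModuleCat.of R (R ⧸ J)) N n) :
    Abelian.Ext (ModuleCat.of R (R ⧸ I)) N n := (Ext.mk₀ (tr h)).comp ξ (zero_add n)

lemma rs_zero {I J : Ideal R} (h : I ≤ J) :
    rs h (0 : Abelian.Ext (ModuleCat.of R (R ⧸ J)) N n) = 0 := by
  simp [rs]

lemma rs_add {I J : Ideal R} (h : I ≤ J) (ξ η : Abelian.Ext (ModuleCat.of R (R ⧸ J)) N n) :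
    rs h (ξ + η) = rs h ξ + rs h η := by
  simp [rs]

lemma rs_smul {I J : Ideal R} (h : I ≤ J) (s : R) (ξ : Abelian.Ext (ModuleCat.of R (R ⧸ J)) N n) :
    rs h (s • ξ) = s • rs h ξ := by
  simp [rs]

lemma rs_rs {I J K : Ideal R} (h : I ≤ J) (h' : J ≤ K)
    (ξ : Abelian.Ext (ModuleCat.of R (R ⧸ K)) N n) :
    rs h (rs h' ξ) = rs (h.trans h') ξ := by
  have : tr (h.trans h') = tr h ≫ tr h' := by ext; rfl
  rw [rs, rs, rs, this, ← Ext.mk₀_comp_mk₀_assoc]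

lemma rs_comp {I J : Ideal R} (h : I ≤ J) {m d : ℕ}
    (ξ : Abelian.Ext (ModuleCat.of R (R ⧸ J)) N n) (β : Abelian.Ext N N' m) (hd : n + m = d) :
    rs h (ξ.comp β hd) = (rs h ξ).comp β hd := by
  rw [rs, rs, Ext.comp_assoc]
  lia

lemma smul_zero_of_kill {I : Ideal R} {s : R} (hs : s ∈ I)
    (ξ : Abelian.Ext (ModuleCat.of R (R ⧸ I)) N n) : s • ξ = 0 := by
  have h : s • (𝟙 (ModuleCat.of R (R ⧸ I))) = 0 := by
    ext
    change s • (Submodule.Quotient.mk 1 : R ⧸ I) = 0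
    rw [← Submodule.Quotient.mk_smul, Submodule.Quotient.mk_eq_zero]
    simpa using hs
  have h2 : s • ξ = (s • Ext.mk₀ (𝟙 (ModuleCat.of R (R ⧸ I)))).comp ξ (zero_add n) := by
    rw [Ext.smul_comp, Ext.mk₀_id_comp]
  rw [h2, ← Ext.mk₀_smul, h, Ext.mk₀_zero, Ext.zero_comp]

lemma hom_ext_one {I : Ideal R} {f g : ModuleCat.of R (R ⧸ I) ⟶ N}
    (h : f (Submodule.Quotient.mk 1 : R ⧸ I) = g (Submodule.Quotient.mk 1 : R ⧸ I)) : f = g := by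
  ext
  exact h

/-- The map `R/I → N` attached to an element killed by `I`. -/
def elt {I : Ideal R} (u : N) (hu : ∀ r ∈ I, r • u = 0) : ModuleCat.of R (R ⧸ I) ⟶ N :=
  ModuleCat.ofHom (Submodule.liftQ I (LinearMap.toSpanSingleton R N u) (by
    intro r hr
    exact hu r hr))

lemma elt_one {I : Ideal R} (u : N) (hu : ∀ r ∈ I, r • u = 0) :
    elt u hu (Submodule.Quotient.mk 1 : R ⧸ I) = u :=
  one_smul R u

lemma exists_elt {I : Ideal R} (ξ : Abelian.Ext (ModuleCat.of R (R ⧸ I)) N 0) :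
    ∃ (u : N) (hu : ∀ r ∈ I, r • u = 0), ξ = Ext.mk₀ (elt u hu) := by
  obtain ⟨f, rfl⟩ := (Ext.mk₀_bijective _ _).2 ξ
  refine ⟨f (Submodule.Quotient.mk 1 : R ⧸ I), ?_, ?_⟩
  · intro r hr
    rw [← map_smul, ← Submodule.Quotient.mk_smul]
    have : (Submodule.Quotient.mk (r • 1) : R ⧸ I) = 0 := by
      rw [Submodule.Quotient.mk_eq_zero]
      simpa using hr
    rw [this, map_zero]
  · congr 1
    apply hom_ext_one
    rw [elt_one]

lemma rs_elt {I J : Ideal R} (h : I ≤ J) (u : N) (hu : ∀ r ∈ J, r • u = 0) :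
    rs h (Ext.mk₀ (elt u hu)) = Ext.mk₀ (elt u fun r hr => hu r (h hr)) := by
  rw [rs, Ext.mk₀_comp_mk₀]
  congr 1
  apply hom_ext_one
  rw [elt_one]
  exact elt_one u hu

lemma elt_comp {I : Ideal R} (u : N) (hu : ∀ r ∈ I, r • u = 0) (f : N ⟶ N') :
    (Ext.mk₀ (elt u hu)).comp (Ext.mk₀ f) (zero_add 0) =
      Ext.mk₀ (elt (f u) fun r hr => by rw [← map_smul, hu r hr, map_zero]) := by
  rw [Ext.mk₀_comp_mk₀]
  congr 1
  apply hom_ext_one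
  rw [elt_one]
  exact congrArg f (elt_one u hu)

lemma elt_eq {I : Ideal R} {u v : N} {hu : ∀ r ∈ I, r • u = 0} {hv : ∀ r ∈ I, r • v = 0}
    (h : (Ext.mk₀ (elt u hu)) = Ext.mk₀ (elt v hv)) : u = v := by
  have h1 := (Ext.mk₀_bijective _ _).1 h
  rw [← elt_one u hu, h1, elt_one]

lemma elt_congr {I : Ideal R} {u v : N} {hu : ∀ r ∈ I, r • u = 0} {hv : ∀ r ∈ I, r • v = 0}
    (h : u = v) : (Ext.mk₀ (elt u hu)) = Ext.mk₀ (elt v hv) := by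
  subst h; rfl

lemma smul_elt {I : Ideal R} (u : N) (hu : ∀ r ∈ I, r • u = 0) (s : R) :
    s • (Ext.mk₀ (elt u hu)) = Ext.mk₀ (elt (s • u) fun r hr => by
      rw [smul_comm, hu r hr, smul_zero]) := by
  rw [← Ext.mk₀_smul]
  congr 1
  apply hom_ext_one
  rw [elt_one]
  exact congrArg (s • ·) (elt_one u hu)

lemma sub_elt {I : Ideal R} (u v : N) (hu : ∀ r ∈ I, r • u = 0) (hv : ∀ r ∈ I, r • v = 0) :
    Ext.mk₀ (elt u hu) - Ext.mk₀ (elt v hv) = Ext.mk₀ (elt (u - v) fun r hr => by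
      rw [smul_sub, hu r hr, hv r hr, sub_zero]) := by
  rw [sub_eq_iff_eq_add, ← Ext.mk₀_add]
  congr 1
  apply hom_ext_one
  rw [elt_one]
  refine Eq.trans ?_ (congrArg₂ (· + ·) (elt_one (u - v) _) (elt_one v hv)).symm
  simp

end PC

section PD
variable {R : Type u} [CommRing R]
open Abelian

/-- A class becoming zero after restriction to a higher power. -/
def EvZ (a : Ideal R) {k n : ℕ} {N : ModuleCat.{u} R}
    (ξ : Abelian.Ext (ModuleCat.of R (R ⧸ a ^ k)) N n) : Prop :=
  ∃ (l : ℕ) (h : a ^ l ≤ a ^ k), rs h ξ = 0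

lemma pow_le' (a : Ideal R) {k l : ℕ} (h : k ≤ l) : a ^ l ≤ a ^ k := Ideal.pow_le_pow_right h

lemma EvZ.zero (a : Ideal R) (k n : ℕ) (N : ModuleCat.{u} R) :
    EvZ a (0 : Abelian.Ext (ModuleCat.of R (R ⧸ a ^ k)) N n) := ⟨k, le_rfl, rs_zero _⟩

lemma rs_le_zero {I J K : Ideal R} {n : ℕ} {N : ModuleCat.{u} R} (h : I ≤ J) (h' : K ≤ I)
    {ξ : Abelian.Ext (ModuleCat.of R (R ⧸ J)) N n} (hξ : rs h ξ = 0) :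
    rs (h'.trans h) ξ = 0 := by
  rw [← rs_rs h' h, hξ, rs_zero]

lemma EvZ.add {a : Ideal R} {k n : ℕ} {N : ModuleCat.{u} R}
    {ξ η : Abelian.Ext (ModuleCat.of R (R ⧸ a ^ k)) N n} (h : EvZ a ξ) (h' : EvZ a η) :
    EvZ a (ξ + η) := by
  obtain ⟨l, hl, h⟩ := h
  obtain ⟨l', hl', h'⟩ := h'
  refine ⟨max l l', (pow_le' a (le_max_left _ _)).trans hl, ?_⟩
  rw [rs_add, rs_le_zero hl (pow_le' a (le_max_left _ _)) h,
    rs_le_zero hl' (pow_le' a (le_max_right _ _)) h', add_zero]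

lemma EvZ.smul {a : Ideal R} {k n : ℕ} {N : ModuleCat.{u} R} (s : R)
    {ξ : Abelian.Ext (ModuleCat.of R (R ⧸ a ^ k)) N n} (h : EvZ a ξ) :
    EvZ a (s • ξ) := by
  obtain ⟨l, hl, h⟩ := h
  exact ⟨l, hl, by rw [rs_smul, h, smul_zero]⟩

lemma EvZ.comp {a : Ideal R} {k n m d : ℕ} {N N' : ModuleCat.{u} R}
    {ξ : Abelian.Ext (ModuleCat.of R (R ⧸ a ^ k)) N n} (h : EvZ a ξ)
    (β : Abelian.Ext N N' m) (hd : n + m = d) :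
    EvZ a (ξ.comp β hd) := by
  obtain ⟨l, hl, h⟩ := h
  exact ⟨l, hl, by rw [rs_comp, h, Ext.zero_comp]⟩

lemma EvZ.of_rs {a : Ideal R} {k l n : ℕ} {N : ModuleCat.{u} R} (hk : a ^ l ≤ a ^ k)
    {ξ : Abelian.Ext (ModuleCat.of R (R ⧸ a ^ k)) N n} (h : EvZ a (rs hk ξ)) : EvZ a ξ := by
  obtain ⟨l', hl', h⟩ := h
  exact ⟨l', hl'.trans hk, by rw [← rs_rs hl' hk, h]⟩

lemma EvZ.rs {a : Ideal R} {k l n : ℕ} {N : ModuleCat.{u} R} (hk : a ^ l ≤ a ^ k)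
    {ξ : Abelian.Ext (ModuleCat.of R (R ⧸ a ^ k)) N n} (h : EvZ a ξ) :
    EvZ a (rs hk ξ) := by
  obtain ⟨l', hl', h⟩ := h
  refine ⟨max l' l, pow_le' a (le_max_right _ _), ?_⟩
  rw [rs_rs]
  exact rs_le_zero hl' (pow_le' a (le_max_left _ _)) h

/-- The cokernel sequence of a linear map. -/
def sesQ {A B : Type u} [AddCommGroup A] [Module R A] [AddCommGroup B] [Module R B]
    (f : A →ₗ[R] B) : ShortComplex (ModuleCat.{u} R) :=
  ShortComplex.mk (ModuleCat.ofHom f) (ModuleCat.ofHom (LinearMap.range f).mkQ) (by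
    ext x
    exact (Submodule.Quotient.mk_eq_zero _).2 ⟨x, rfl⟩)

lemma sesQ_exact {A B : Type u} [AddCommGroup A] [Module R A] [AddCommGroup B] [Module R B]
    (f : A →ₗ[R] B) (hf : Function.Injective f) : (sesQ f).ShortExact := by
  apply ModuleCat.shortComplex_shortExact
  · exact LinearMap.exact_map_mkQ_range f
  · exact hf
  · exact Submodule.mkQ_surjective _

lemma elt_lift {S : ShortComplex (ModuleCat.{u} R)} (hS : S.ShortExact) {I : Ideal R}
    (e : S.X₂) (he : ∀ r ∈ I, r • e = 0) (v : S.X₃) (hev : S.g e = v)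
    (hv : ∀ r ∈ I, r • v = 0) : (Ext.mk₀ (elt v hv)).comp hS.extClass (zero_add 1) = 0 := by
  have h1 : Ext.mk₀ (elt v hv) =
      (Ext.mk₀ (elt e he)).comp (Ext.mk₀ S.g) (zero_add 0) := by
    rw [elt_comp]
    exact elt_congr hev.symm
  rw [h1, Ext.comp_assoc_of_second_deg_zero, hS.comp_extClass, Ext.comp_zero]

lemma torsion_van [IsNoetherianRing R] (a : Ideal R) (i : ℕ) :
    ∀ N : ModuleCat.{u} R, (∀ x : N, x ∈ Gam a N) → Van a (i + 1) N := by
  induction i with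
  | zero =>
    intro N hN k ξ
    let E := Injective.under N
    have hE : Injective (ModuleCat.of R (Gam a E)) :=
      injective_of_baer (baer_Gam a (baer_of_injective E))
    let f : N →ₗ[R] Gam a E := LinearMap.codRestrict (Gam a E) (Injective.ι N).hom (by
      intro x
      obtain ⟨k, hk⟩ := hN x
      exact ⟨k, fun r hr => by rw [← map_smul, hk r hr, map_zero]⟩)
    have hf : Function.Injective f := by
      intro x y h
      exact (ModuleCat.mono_iff_injective (Injective.ι N)).1 inferInstance
        (congrArg Subtype.val h)
    have hS := sesQ_exact f hf
    obtain ⟨w, rfl⟩ := Ext.covariant_sequence_exact₁ _ hS ξ (Ext.eq_zero_of_injective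
      (I := ModuleCat.of R (Gam a E)) _) (zero_add 1)
    obtain ⟨v, hv, rfl⟩ := exists_elt w
    obtain ⟨e, he⟩ := Submodule.mkQ_surjective _ v
    obtain ⟨l, hl⟩ := e.2
    have hkl := pow_le' a (le_max_left k l)
    refine ⟨max k l, hkl, ?_⟩
    have he0 : ∀ r ∈ a ^ (max k l), r • e = 0 := by
      intro r hr
      apply Subtype.ext
      exact hl r (pow_le' a (le_max_right k l) hr)
    refine (rs_comp hkl _ _ _).trans ?_
    rw [rs_elt]
    exact elt_lift hS e he0 v he _
  | succ i ih =>
    intro N hN k ξ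
    let E := Injective.under N
    have hE : Injective (ModuleCat.of R (Gam a E)) :=
      injective_of_baer (baer_Gam a (baer_of_injective E))
    let f : N →ₗ[R] Gam a E := LinearMap.codRestrict (Gam a E) (Injective.ι N).hom (by
      intro x
      obtain ⟨k, hk⟩ := hN x
      exact ⟨k, fun r hr => by rw [← map_smul, hk r hr, map_zero]⟩)
    have hf : Function.Injective f := by
      intro x y h
      exact (ModuleCat.mono_iff_injective (Injective.ι N)).1 inferInstance
        (congrArg Subtype.val h)
    have hS := sesQ_exact f hf
    obtain ⟨w, rfl⟩ := Ext.covariant_sequence_exact₁ _ hS ξ (Ext.eq_zero_of_injective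
      (I := ModuleCat.of R (Gam a E)) _) rfl
    refine EvZ.comp (ih (sesQ f).X₃ ?_ k w) _ _
    intro v
    obtain ⟨e, rfl⟩ := Submodule.mkQ_surjective _ v
    obtain ⟨l, hl⟩ := e.2
    refine ⟨l, fun r hr => ?_⟩
    have : r • e = 0 := Subtype.ext (hl r hr)
    change r • (LinearMap.range f).mkQ e = 0
    rw [← map_smul, this, map_zero]

end PD

section PE1
variable {R : Type u} [CommRing R]
open Abelian

lemma smul_zero_of_kill_right {X N : ModuleCat.{u} R} {n : ℕ} {s : R} (hs : ∀ x : N, s • x = 0)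
    (ξ : Abelian.Ext X N n) : s • ξ = 0 := by
  have h : s • (𝟙 N) = 0 := by
    ext x
    exact hs x
  rw [Ext.smul_eq_comp_mk₀, h, Ext.mk₀_zero, Ext.comp_zero]

/-- The conclusion of the support lemma. -/
def HasCh (i : ℕ) (q : PrimeSpectrum R) (N : Type u) [AddCommGroup N] [Module R N] : Prop :=
  ∃ c : LTSeries (PrimeSpectrum R), c.length = i ∧ c.last = q ∧ c.head ∈ Module.support R N

lemma support_chain [IsNoetherianRing R] (a : Ideal R) (i : ℕ) :
    ∀ (N : Type u) [AddCommGroup N] [Module R N] [Module.Finite R N] (k : ℕ)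
      (ξ : Abelian.Ext (ModuleCat.of R (R ⧸ a ^ k)) (ModuleCat.of R N) i) (q : PrimeSpectrum R),
      (∀ s ∉ q.asIdeal, ¬ EvZ a (s • ξ)) → HasCh i q N := by
  induction i with
  | zero =>
    intro N _ _ _ k ξ q h
    refine ⟨RelSeries.singleton _ q, rfl, rfl, ?_⟩
    rw [Module.mem_support_iff_of_finite]
    intro s hs
    by_contra hq
    apply h s hq
    rw [smul_zero_of_kill_right (fun x => Module.mem_annihilator.1 hs x)]
    exact EvZ.zero _ _ _ _
  | succ i ih =>
    intro N _ _ hfin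
    refine IsNoetherianRing.induction_on_isQuotientEquivQuotientPrime R hfin
      (motive := fun N _ _ _ => ∀ (k : ℕ)
      (ξ : Abelian.Ext (ModuleCat.of R (R ⧸ a ^ k)) (ModuleCat.of R N) (i + 1))
      (q : PrimeSpectrum R),
      (∀ s ∉ q.asIdeal, ¬ EvZ a (s • ξ)) → HasCh (i + 1) q N) ?_ ?_ ?_
    · intro N _ _ _ _ k ξ q h
      exfalso
      refine h 1 (fun h1 => q.2.ne_top ((Ideal.eq_top_iff_one _).2 h1)) ?_
      rw [smul_zero_of_kill_right (fun x => Subsingleton.elim (α := N) _ _)]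
      exact EvZ.zero _ _ _ _
    · intro N _ _ _ P e k ξ q h
      have hP : ∀ s ∈ P.asIdeal, ∀ x : N, s • x = 0 := by
        intro s hs x
        apply e.injective
        rw [map_smul, map_zero]
        obtain ⟨y, hy⟩ := Submodule.mkQ_surjective _ (e x)
        rw [← hy, ← map_smul]
        exact (Submodule.Quotient.mk_eq_zero _).2 (Ideal.mul_mem_right _ _ hs)
      by_cases haP : a ≤ P.asIdeal
      · exfalso
        refine h 1 (fun h1 => q.2.ne_top ((Ideal.eq_top_iff_one _).2 h1)) ?_
        rw [one_smul]
        exact torsion_van a i (ModuleCat.of R N) (fun x => ⟨1, fun r hr =>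
          hP r (haP (by simpa using hr)) x⟩) k ξ
      · obtain ⟨r, hra, hrP⟩ := Set.not_subset.1 haP
        have hρ : r ^ k ∉ P.asIdeal := fun h => hrP (P.2.mem_of_pow_mem _ h)
        let f : N →ₗ[R] N := (r ^ k) • LinearMap.id
        have hf : Function.Injective f := by
          rw [injective_iff_map_eq_zero]
          intro x hx
          have hx' : r ^ k • x = 0 := hx
          apply e.injective
          rw [map_zero]
          have h2 : r ^ k • e x = 0 := by rw [← map_smul, hx', map_zero]
          obtain ⟨y, hy⟩ := Submodule.mkQ_surjective _ (e x)
          rw [← hy, ← map_smul] at h2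
          have h3 : r ^ k * y ∈ P.asIdeal := (Submodule.Quotient.mk_eq_zero _).1 h2
          rw [← hy]
          exact (Submodule.Quotient.mk_eq_zero _).2 ((P.2.mem_or_mem h3).resolve_left hρ)
        have hS := sesQ_exact f hf
        have hz : ξ.comp (Ext.mk₀ (sesQ f).f) (add_zero (i + 1)) = 0 := by
          have h1 : r ^ k • ξ = 0 := smul_zero_of_kill (Ideal.pow_mem_pow hra k) ξ
          rw [Ext.smul_eq_comp_mk₀] at h1
          exact h1
        obtain ⟨w, hw⟩ := Ext.covariant_sequence_exact₁ _ hS ξ hz rfl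
        obtain ⟨c, hc, hcl, hch⟩ := ih (N ⧸ LinearMap.range f) k w q (by
          intro s hs hev
          apply h s hs
          have h1 := hev.comp hS.extClass rfl
          have h2 := Ext.smul_comp (R := R) w hS.extClass rfl s
          rw [hw] at h2
          exact Eq.mp (congrArg (EvZ a) h2) h1)
        rw [Module.mem_support_iff_of_finite] at hch
        have hlt : P < c.head := by
          refine lt_of_le_of_ne ?_ ?_
          · intro s hs
            apply hch
            rw [Module.mem_annihilator]
            intro x
            obtain ⟨y, rfl⟩ := Submodule.mkQ_surjective _ x
            rw [← map_smul, hP s hs, map_zero]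
          · intro heq
            apply hρ
            rw [heq]
            apply hch
            rw [Module.mem_annihilator]
            intro x
            obtain ⟨y, rfl⟩ := Submodule.mkQ_surjective _ x
            rw [← map_smul]
            exact (Submodule.Quotient.mk_eq_zero _).2 ⟨y, rfl⟩
        refine ⟨c.cons P hlt, by simp [hc], by simp [hcl], ?_⟩
        rw [RelSeries.head_cons, Module.mem_support_iff_of_finite]
        intro s hs
        have h1 := Module.mem_annihilator.1 hs (e.symm (Submodule.mkQ _ 1))
        rw [← map_smul, ← map_smul, LinearEquiv.map_eq_zero_iff] at h1
        have h2 := (Submodule.Quotient.mk_eq_zero _).1 h1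
        simpa using h2
    · intro N₁ _ _ _ N₂ _ _ _ N₃ _ _ _ f g hf hg hfg h₁ h₃ k ξ q h
      let S : ShortComplex (ModuleCat.{u} R) :=
        ShortComplex.mk (ModuleCat.ofHom f) (ModuleCat.ofHom g) (by
          ext x
          exact hfg.apply_apply_eq_zero x)
      have hS : S.ShortExact := ModuleCat.shortComplex_shortExact S hfg hf hg
      by_cases hc : ∀ s ∉ q.asIdeal, ¬ EvZ a
          (s • (ξ.comp (Ext.mk₀ (ModuleCat.ofHom g)) (add_zero _)))
      · obtain ⟨c, h1, h2, h3⟩ := h₃ k _ q hc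
        exact ⟨c, h1, h2, Module.support_subset_of_surjective g hg h3⟩
      · push Not at hc
        obtain ⟨s, hs, l, hl, h0⟩ := hc
        rw [← Ext.smul_comp, rs_comp] at h0
        obtain ⟨η, hη⟩ := Ext.covariant_sequence_exact₂ _ hS (rs hl (s • ξ)) h0
        obtain ⟨c, h1, h2, h3⟩ := h₁ l η q (by
          intro s' hs' hev
          apply h (s' * s) (fun hh => (q.2.mem_or_mem hh).elim hs' hs)
          apply EvZ.of_rs hl
          have := hev.comp (Ext.mk₀ S.f) (add_zero _)
          rw [Ext.smul_comp] at this
          erw [hη] at this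
          rw [mul_smul, rs_smul]
          exact this)
        exact ⟨c, h1, h2, Module.support_subset_of_injective f hf h3⟩

lemma local_kill [IsNoetherianRing R] [IsLocalRing R] (a : Ideal R) (n : ℕ) (M : Type u)
    [AddCommGroup M] [Module R M] [Module.Finite R M]
    (hn : ((n : ℕ∞) : WithBot ℕ∞) = ringKrullDim (R ⧸ Module.annihilator R M)) (k : ℕ)
    (ξ : Abelian.Ext (ModuleCat.of R (R ⧸ a ^ k)) (ModuleCat.of R M) n) (y : R)
    (hy : y ∈ IsLocalRing.maximalIdeal R) : ∃ c : ℕ, EvZ a (y ^ c • ξ) := by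
  let J : Ideal R :=
    { carrier := {s | EvZ a (s • ξ)}
      zero_mem' := by
        simp only [Set.mem_ofPred_eq, zero_smul]
        exact EvZ.zero _ _ _ _
      add_mem' := by
        intro s t hs ht
        simp only [Set.mem_ofPred_eq, add_smul] at *
        exact hs.add ht
      smul_mem' := by
        intro r s hs
        simp only [Set.mem_ofPred_eq, smul_eq_mul, mul_smul] at *
        exact hs.smul r }
  suffices h : y ∈ J.radical by
    obtain ⟨c, hc⟩ := h
    exact ⟨c, hc⟩
  rw [Ideal.radical_eq_sInf, Ideal.mem_sInf]
  rintro q ⟨hJq, hq⟩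
  by_cases hqm : q = IsLocalRing.maximalIdeal R
  · rwa [hqm]
  exfalso
  obtain ⟨c, hc, hcl, hch⟩ := support_chain a n M k ξ ⟨q, hq⟩ (fun s hs hev => hs (hJq hev))
  have hlt : c.last < IsLocalRing.closedPoint R := by
    rw [hcl]
    exact lt_of_le_of_ne (IsLocalRing.le_maximalIdeal hq.ne_top)
      (fun h => hqm (congrArg PrimeSpectrum.asIdeal h))
  let c' := c.snoc _ hlt
  have hdim : ringKrullDim (R ⧸ Module.annihilator R M) = Module.supportDim R M :=
    (Module.supportDim_eq_ringKrullDim_quotient_annihilator ..).symm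
  rw [hdim] at hn
  have hmem : ∀ i, c' i ∈ Module.support R M := by
    intro i
    rw [Module.mem_support_iff_of_finite] at hch ⊢
    refine hch.trans ?_
    have h1 : c'.head ≤ c' i := LTSeries.monotone c' (Fin.zero_le i)
    simpa [c'] using! h1
  let c'' : LTSeries (Module.support R M) :=
    { length := c'.length
      toFun := fun i => ⟨c' i, hmem i⟩
      step := fun i => c'.step i }
  have h5 : (c''.length : WithBot ℕ∞) ≤ Module.supportDim R M := Order.LTSeries.length_le_krullDim c''
  rw [← hn] at h5
  have h6 : c''.length = n + 1 := by simp [c'', c', hc]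
  rw [h6] at h5
  have : n + 1 ≤ n := by exact_mod_cast h5
  lia

end PE1

section PF1
variable {R : Type u} [CommRing R]
open Abelian

lemma kill_sup {N : Type u} [AddCommGroup N] [Module R N] (a : Ideal R) (y : R) (k c : ℕ) (u : N)
    (h1 : ∀ r ∈ a ^ k, r • u = 0) (h2 : y ^ c • u = 0) :
    ∀ r ∈ (a ⊔ Ideal.span {y}) ^ (k + c), r • u = 0 := by
  intro r hr
  have h3 := Ideal.sup_pow_add_le_pow_sup_pow hr
  rw [Ideal.span_singleton_pow] at h3
  obtain ⟨s, hs, t, ht, rfl⟩ := Submodule.mem_sup.1 h3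
  obtain ⟨z, rfl⟩ := Ideal.mem_span_singleton'.1 ht
  rw [add_smul, h1 s hs, mul_smul, h2, smul_zero, add_zero]

lemma lift_class [IsNoetherianRing R] (a : Ideal R) (y : R) (c : ℕ) (i : ℕ) :
    ∀ (N : ModuleCat.{u} R) (k : ℕ)
      (ξ : Abelian.Ext (ModuleCat.of R (R ⧸ a ^ k)) N i), y ^ c • ξ = 0 →
      ∃ (l : ℕ) (ζ : Abelian.Ext (ModuleCat.of R (R ⧸ (a ⊔ Ideal.span {y}) ^ l)) N i) (l' : ℕ)
        (h1 : a ^ l' ≤ a ^ k) (h2 : a ^ l' ≤ (a ⊔ Ideal.span {y}) ^ l), rs h2 ζ = rs h1 ξ := by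
  induction i with
  | zero =>
    intro N k ξ h
    obtain ⟨u, hu, rfl⟩ := exists_elt ξ
    have h0 : y ^ c • u = 0 := by
      rw [smul_elt] at h
      have h2 : Ext.mk₀ (elt (I := a ^ k) (y ^ c • u) (fun r hr => by
        rw [smul_comm, hu r hr, smul_zero])) = Ext.mk₀ (elt (I := a ^ k) (0 : N) (by simp)) := by
        rw [h, ← Ext.mk₀_zero]
        congr 1
        apply hom_ext_one
        rw [elt_one]
        rfl
      exact elt_eq h2
    refine ⟨k + c, Ext.mk₀ (elt u (kill_sup a y k c u hu h0)), k + c,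
      pow_le' a (Nat.le_add_right _ _), Ideal.pow_right_mono le_sup_left _, ?_⟩
    rw [rs_elt, rs_elt]
  | succ i ih =>
    intro N k ξ h
    let f : N →ₗ[R] (Injective.under N : ModuleCat.{u} R) := (Injective.ι N).hom
    have hf : Function.Injective f :=
      (ModuleCat.mono_iff_injective (Injective.ι N)).1 inferInstance
    have hS := sesQ_exact f hf
    obtain ⟨w, hw⟩ := Ext.covariant_sequence_exact₁ _ hS ξ (Ext.eq_zero_of_injective
      (I := Injective.under N) _) rfl
    have hw0 : (y ^ c • w).comp hS.extClass rfl = 0 :=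
      (Ext.smul_comp (R := R) w hS.extClass rfl (y ^ c)).trans
        ((congrArg (y ^ c • ·) hw).trans h)
    obtain ⟨v, hv⟩ := Ext.covariant_sequence_exact₃ _ hS _ rfl hw0
    cases i with
    | succ i =>
      have hv0 : v = 0 := Ext.eq_zero_of_injective (I := Injective.under N) _
      rw [hv0, Ext.zero_comp] at hv
      obtain ⟨l, ζ, l', h1, h2, h3⟩ := ih (sesQ f).X₃ k w hv.symm
      refine ⟨l, ζ.comp hS.extClass rfl, l', h1, h2, ?_⟩
      refine (rs_comp h2 ζ hS.extClass rfl).trans ?_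
      rw [h3, ← rs_comp]
      exact congrArg (rs h1) hw
    | zero =>
      obtain ⟨u, hu, rfl⟩ := exists_elt w
      obtain ⟨e, he, rfl⟩ := exists_elt v
      rw [smul_elt, elt_comp] at hv
      have hge : (sesQ f).g e = y ^ c • u := elt_eq hv
      let Γ := Gam a (Injective.under N : ModuleCat.{u} R)
      have hΓ : Module.Baer R Γ := baer_Gam a (baer_of_injective _)
      let T : ℕ →o Submodule R R :=
        { toFun := fun m => LinearMap.ker (LinearMap.lsmul R R (y ^ m))
          monotone' := by
            intro i j hij x hx
            have hx' : y ^ i * x = 0 := hx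
            change y ^ j * x = 0
            rw [← Nat.sub_add_cancel hij, pow_add, mul_assoc, hx', mul_zero] }
      obtain ⟨m, hm⟩ := monotone_stabilizes_iff_noetherian.2 (inferInstance : IsNoetherian R R) T
      let e0 : Γ := ⟨e, k, he⟩
      obtain ⟨g, hg⟩ := baer_ext hΓ (LinearMap.lsmul R R (y ^ (m + c)))
        (LinearMap.toSpanSingleton R Γ (y ^ m • e0)) (by
          intro x hx
          have hx' : x ∈ T m := by
            rw [hm (m + c) (Nat.le_add_right _ _)]
            exact hx
          have hx2 : y ^ m * x = 0 := hx'
          change x • y ^ m • e0 = 0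
          rw [smul_smul, mul_comm, hx2, zero_smul])
      have hg1 := hg 1
      have hg2 : y ^ (m + c) • g 1 = y ^ m • e0 := by
        have h1 : g (y ^ (m + c) • 1) = (1 : R) • y ^ m • e0 := hg1
        rwa [map_smul, one_smul] at h1
      obtain ⟨l, hl⟩ := (g 1).2
      let e' : (sesQ f).X₂ := ((g 1 : Γ) : (Injective.under N : ModuleCat.{u} R))
      have he' : y ^ (m + c) • e' = y ^ m • e := congrArg Subtype.val hg2
      let u' := u - (sesQ f).g e'
      have hle' : ∀ r ∈ a ^ l, r • e' = 0 := hl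
      have hge' : ∀ r ∈ a ^ l, r • (sesQ f).g e' = 0 := by
        intro r hr
        rw [← map_smul, hle' r hr, map_zero]
      have hu1 : ∀ r ∈ a ^ (k + l), r • u' = 0 := by
        intro r hr
        rw [smul_sub, hu r (pow_le' a (Nat.le_add_right _ _) hr),
          hge' r (pow_le' a (Nat.le_add_left _ _) hr), sub_zero]
      have hu2 : y ^ (m + c) • u' = 0 := by
        rw [smul_sub, ← map_smul, he', map_smul, hge, smul_smul, pow_add, sub_self]
      have hu3 := kill_sup a y (k + l) (m + c) u' hu1 hu2
      have hLk : a ^ (k + l + (m + c)) ≤ a ^ k := pow_le' a (by lia)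
      have hLl : a ^ (k + l + (m + c)) ≤ a ^ l := pow_le' a (by lia)
      have hLb : a ^ (k + l + (m + c)) ≤ (a ⊔ Ideal.span {y}) ^ (k + l + (m + c)) :=
        Ideal.pow_right_mono le_sup_left _
      refine ⟨k + l + (m + c), (Ext.mk₀ (elt u' hu3)).comp hS.extClass rfl,
        k + l + (m + c), hLk, hLb, ?_⟩
      refine (rs_comp hLb _ hS.extClass rfl).trans ?_
      refine Eq.trans ?_ (congrArg (rs hLk) hw)
      refine Eq.trans ?_ (rs_comp hLk _ hS.extClass rfl).symm
      rw [rs_elt, rs_elt]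
      have h7 := elt_lift hS e' (fun r hr => hle' r (hLl hr)) _ rfl
        (fun r hr => hge' r (hLl hr))
      have h8 := sub_elt u ((sesQ f).g e') (fun r hr => hu r (hLk hr))
        (fun r hr => hge' r (hLl hr))
      have h9 : Ext.mk₀ (elt u' fun r hr => hu3 r (hLb hr)) =
        Ext.mk₀ (elt u fun r hr => hu r (hLk hr)) - Ext.mk₀ (elt ((sesQ f).g e')
          (fun r hr => hge' r (hLl hr))) := h8.symm
      rw [h9, sub_eq_add_neg, Ext.add_comp, Ext.neg_comp, h7, neg_zero, add_zero]

lemma van_step [IsNoetherianRing R] [IsLocalRing R] (a : Ideal R) (n : ℕ) (M : Type u)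
    [AddCommGroup M] [Module R M] [Module.Finite R M]
    (hn : ((n : ℕ∞) : WithBot ℕ∞) = ringKrullDim (R ⧸ Module.annihilator R M)) (y : R)
    (hy : y ∈ IsLocalRing.maximalIdeal R)
    (h : Van (a ⊔ Ideal.span {y}) n (ModuleCat.of R M)) : Van a n (ModuleCat.of R M) := by
  intro k ξ
  change EvZ a ξ
  obtain ⟨c, l, hl, hc⟩ := local_kill a n M hn k ξ y hy
  rw [rs_smul] at hc
  obtain ⟨m, ζ, l', h1, h2, h3⟩ := lift_class a y c n _ l _ hc
  obtain ⟨j, hj, h0⟩ := h m ζ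
  have h0' : rs hj ζ = 0 := h0
  let b := a ⊔ Ideal.span {y}
  have hab : a ^ (max j l') ≤ b ^ j :=
    (pow_le' a (le_max_left _ _)).trans (Ideal.pow_right_mono le_sup_left _)
  refine ⟨max j l', (pow_le' a (le_max_right _ _)).trans (h1.trans hl), ?_⟩
  change rs _ ξ = 0
  rw [← rs_rs (pow_le' a (le_max_right _ _)) (h1.trans hl), ← rs_rs h1 hl, ← h3, rs_rs,
    ← rs_rs hab hj, h0', rs_zero]

lemma van_le [IsNoetherianRing R] [IsLocalRing R] (n : ℕ) (M : Type u)
    [AddCommGroup M] [Module R M] [Module.Finite R M]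
    (hn : ((n : ℕ∞) : WithBot ℕ∞) = ringKrullDim (R ⧸ Module.annihilator R M))
    (a p : Ideal R) (hap : a ≤ p) (hp : p ≤ IsLocalRing.maximalIdeal R)
    (h : Van p n (ModuleCat.of R M)) : Van a n (ModuleCat.of R M) := by
  classical
  obtain ⟨s, hs⟩ := (isNoetherianRing_iff_ideal_fg R).1 inferInstance p
  have hs' : Ideal.span (s : Set R) = p := hs
  have key : ∀ t : Finset R, (t : Set R) ⊆ p → ∀ a : Ideal R,
      Van (a ⊔ Ideal.span (t : Set R)) n (ModuleCat.of R M) → Van a n (ModuleCat.of R M) := by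
    intro t
    induction t using Finset.induction_on with
    | empty =>
      intro _ a h
      simpa using h
    | insert y t hy ih =>
      intro ht a h
      rw [Finset.coe_insert, Set.insert_subset_iff] at ht
      apply van_step a n M hn y (hp ht.1)
      apply ih ht.2
      rwa [sup_assoc, ← Ideal.span_union, Set.singleton_union, ← Finset.coe_insert]
  apply key s (hs' ▸ Ideal.subset_span) a
  rwa [hs', sup_eq_right.2 hap]

lemma van_top (n : ℕ) (N : ModuleCat.{u} R) : Van (⊤ : Ideal R) n N := by
  intro k ξ
  refine ⟨k, le_rfl, ?_⟩
  have h1 : (1 : R) ∈ (⊤ : Ideal R) ^ k := by simp [Ideal.top_pow]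
  have : ξ = 0 := by
    rw [← one_smul R ξ]
    exact smul_zero_of_kill h1 ξ
  rw [this, Ext.comp_zero]

end PF1

end LCAll

section PFinal
open RingTheory.Sequence

lemma length_le_of_regular {R : Type u} [CommRing R] [IsNoetherianRing R] [IsLocalRing R]
    {M : Type u} [AddCommGroup M] [Module R M] [Module.Finite R M] [Nontrivial M] (n : ℕ)
    (hn : ((n : ℕ∞) : WithBot ℕ∞) = ringKrullDim (R ⧸ Module.annihilator R M))
    (rs : List R) (hreg : IsRegular M rs) : rs.length ≤ n := by
  have h1 := Module.supportDim_add_length_eq_supportDim_of_isRegular rs hreg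
  rw [Module.supportDim_eq_ringKrullDim_quotient_annihilator R M, ← hn] at h1
  have hnt : Nontrivial (M ⧸ (Ideal.ofList rs • (⊤ : Submodule R M))) :=
    Submodule.Quotient.nontrivial_iff.2 hreg.top_ne_smul.symm
  have h2 : (0 : WithBot ℕ∞) ≤
      Module.supportDim R (M ⧸ (Ideal.ofList rs • (⊤ : Submodule R M))) := by
    obtain ⟨d, hd⟩ := WithBot.ne_bot_iff_exists.1
      (Module.supportDim_ne_bot_of_nontrivial R (M ⧸ (Ideal.ofList rs • (⊤ : Submodule R M))))
    rw [← hd]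
    exact_mod_cast zero_le
  have h3 : ((rs.length : ℕ) : WithBot ℕ∞) ≤ ((n : ℕ∞) : WithBot ℕ∞) := by
    rw [← h1]
    exact le_add_of_nonneg_left h2
  exact_mod_cast h3

lemma exists_le_assoc {R : Type u} [CommRing R] [IsNoetherianRing R] [IsLocalRing R]
    {M : Type u} [AddCommGroup M] [Module R M] [Module.Finite R M] [Nontrivial M] (n : ℕ)
    (hn : ((n : ℕ∞) : WithBot ℕ∞) = ringKrullDim (R ⧸ Module.annihilator R M))
    (rs : List R) (hreg : IsRegular M rs) (a : Ideal R) (ha : a ≤ IsLocalRing.maximalIdeal R)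
    (hIa : Ideal.ofList rs ≤ a) (hg : gradeM a M = rs.length) :
    ∃ p ∈ associatedPrimes R (M ⧸ (Ideal.ofList rs • (⊤ : Submodule R M))), a ≤ p := by
  have hrs : ∀ r ∈ rs, r ∈ a := fun r hr => hIa (Ideal.subset_span hr)
  have hnt : Nontrivial (M ⧸ (Ideal.ofList rs • (⊤ : Submodule R M))) :=
    Submodule.Quotient.nontrivial_iff.2 hreg.top_ne_smul.symm
  obtain ⟨q, hq⟩ := associatedPrimes.nonempty R (M ⧸ (Ideal.ofList rs • (⊤ : Submodule R M)))
  apply (Ideal.subset_union_prime_finite (associatedPrimes.finite R _) q q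
    (fun I hin _ _ => IsAssociatedPrime.isPrime hin)).mp
  rw [biUnion_associatedPrimes_eq_compl_regular R]
  intro y hy hyreg
  have hw : IsWeaklyRegular M (rs ++ [y]) := by
    rw [isWeaklyRegular_append_iff, isWeaklyRegular_singleton_iff]
    exact ⟨hreg.toIsWeaklyRegular, hyreg⟩
  have hmem : ∀ r ∈ rs ++ [y], r ∈ a := by
    intro r hr
    rcases List.mem_append.1 hr with h | h
    · exact hrs r h
    · rw [List.mem_singleton.1 h]
      exact hy
  have hr : IsRegular M (rs ++ [y]) :=
    IsRegular.of_isWeaklyRegular_of_mem_maximalIdeal M (fun r hr => ha (hmem r hr)) hw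
  have hb : BddAbove {n : ℕ | ∃ rs : List R, rs.length = n ∧ (∀ r ∈ rs, r ∈ a) ∧
      RingTheory.Sequence.IsRegular M rs} := by
    refine ⟨n, ?_⟩
    rintro m ⟨rs, rfl, -, h⟩
    exact length_le_of_regular n hn rs h
  have h1 : (rs ++ [y]).length ≤ gradeM a M := le_csSup hb ⟨_, rfl, hmem, hr⟩
  rw [hg] at h1
  simp at h1

end PFinal

end LCBridge

variable {R : Type u} [CommRing R] [IsNoetherianRing R] [IsLocalRing R]
variable {M : Type u} [AddCommGroup M] [Module R M] [Module.Finite R M] [Nontrivial M]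

theorem stmt16 (rs : List R) (hreg : RingTheory.Sequence.IsRegular M rs) (n : ℕ)
    (hn : ((n : ℕ∞) : WithBot ℕ∞) = ringKrullDim (R ⧸ Module.annihilator R M))
    (hvan : ∀ p ∈ associatedPrimes R (M ⧸ (Ideal.ofList rs • (⊤ : Submodule R M))),
      Subsingleton ↥((localCohomology p n).obj (ModuleCat.of R M)))
    (a : Ideal R) (hIa : Ideal.ofList rs ≤ a) (hg : gradeM a M = rs.length) :
    Subsingleton ↥((localCohomology a n).obj (ModuleCat.of R M)) := by
  rw [LCBridge.van_iff]
  by_cases ha : a = ⊤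
  · rw [ha]
    exact LCBridge.van_top n _
  · obtain ⟨p, hp, hap⟩ := LCBridge.exists_le_assoc n hn rs hreg a
      (IsLocalRing.le_maximalIdeal ha) hIa hg
    exact LCBridge.van_le n M hn a p hap
      (IsLocalRing.le_maximalIdeal (IsAssociatedPrime.isPrime hp).ne_top)
      ((LCBridge.van_iff p n _).1 (hvan p hp))
end
end

section
/- Let b = p_1 ∩ ⋯ ∩ p_l be a finite intersection of prime ideals of R, n = dim M for a finitely generated module M over a Noetherian local ring, and suppose H^n_{p_i}(M) = 0 for each i. Then H^n_b(M) = 0. -/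
universe u

open RingTheory.Sequence CategoryTheory

noncomputable section

namespace LCBridge
open Opposite
variable {R : Type u} [CommRing R]

/-- functoriality of linearYonedaObj -/
def lyMap {K L : ChainComplex (ModuleCat.{u} R) ℕ} (φ : K ⟶ L) (Y : ModuleCat.{u} R) :
    L.linearYonedaObj R Y ⟶ K.linearYonedaObj R Y :=
  (HomologicalComplex.unopFunctor _ _).map ((((linearYoneda R (ModuleCat.{u} R)).obj Y).rightOp.mapHomologicalComplex _).map φ).op

lemma homologyUnop_nat {V : Type*} [Category V] [Abelian V] {c : ComplexShape ℕ}
    {K' K : HomologicalComplex Vᵒᵖ c} (ψ : K' ⟶ K) (n : ℕ) :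
    (HomologicalComplex.homologyMap ψ n).unop ≫ (K'.homologyUnop n).inv =
    (K.homologyUnop n).inv ≫
      HomologicalComplex.homologyMap ((HomologicalComplex.unopFunctor _ _).map ψ.op) n := by
  have h := HomologicalComplex.homologyOp_hom_naturality
    ((HomologicalComplex.unopFunctor _ _).map ψ.op) n
  have h2 := congrArg Quiver.Hom.unop h
  refine (Iso.comp_inv_eq _).2 (Eq.trans ((Iso.eq_inv_comp _).2 ?_) (Category.assoc _ _ _).symm)
  exact h2

lemma isoExt_nat {X X' : ModuleCat.{u} R} {g : X' ⟶ X} {P : ProjectiveResolution X}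
    {P' : ProjectiveResolution X'} (φ : ProjectiveResolution.Hom P' P g) (n : ℕ) (Y : ModuleCat.{u} R) :
    ((Ext R (ModuleCat.{u} R) n).map g.op).app Y ≫ (P'.isoExt n Y).hom =
    (P.isoExt n Y).hom ≫ HomologicalComplex.homologyMap (lyMap φ.hom Y) n := by
  let F := ((linearYoneda R (ModuleCat.{u} R)).obj Y).rightOp
  have h := ProjectiveResolution.isoLeftDerivedObj_inv_naturality g P' P φ.hom
    (by simpa using φ.hom_f_zero_comp_π_f_zero) F n
  have h' := congrArg Quiver.Hom.unop h
  rw [unop_comp, unop_comp] at h'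
  have h2 := homologyUnop_nat ((F.mapHomologicalComplex (ComplexShape.down ℕ)).map φ.hom) n
  have e1 : ((Ext R (ModuleCat.{u} R) n).map g.op).app Y = ((F.leftDerived n).map g).unop := rfl
  have e2 : (P'.isoExt n Y).hom = (P'.isoLeftDerivedObj F n).inv.unop ≫
      (HomologicalComplex.homologyUnop _ n).inv := rfl
  have e3 : (P.isoExt n Y).hom = (P.isoLeftDerivedObj F n).inv.unop ≫
      (HomologicalComplex.homologyUnop _ n).inv := rfl
  refine (congrArg₂ (· ≫ ·) e1 e2).trans ?_
  refine Eq.trans ?_ (congrArg (· ≫ HomologicalComplex.homologyMap (lyMap φ.hom Y) n) e3).symm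
  refine (Category.assoc _ _ _).symm.trans ?_
  refine (congrArg (· ≫ _) h').trans ?_
  refine (Category.assoc _ _ _).trans ?_
  refine Eq.trans ?_ (Category.assoc _ _ _).symm
  exact congrArg ((P.isoLeftDerivedObj F n).inv.unop ≫ ·) h2

section
variable (L : CochainComplex (ModuleCat.{u} R) ℕ) (n : ℕ)

lemma homologyπ_surj (h : L.homology n) : ∃ z : L.cycles n, L.homologyπ n z = h :=
  (ModuleCat.epi_iff_surjective (L.homologyπ n)).1 inferInstance h

lemma exists_cycle (f : L.X n) (hf : L.d n (n+1) f = 0) : ∃ z : L.cycles n, L.iCycles n z = f := by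
  refine ⟨L.cyclesMk (C := ModuleCat.{u} R) f (n+1) (by simp) hf, ?_⟩
  exact L.i_cyclesMk (C := ModuleCat.{u} R) f (n+1) (by simp) hf

lemma cycle_d (z : L.cycles n) : L.d n (n+1) (L.iCycles n z) = 0 := by
  have := L.iCycles_d n (n+1)
  exact congr($this z)

lemma homologyπ_eq_zero_iff (z : L.cycles n) : L.homologyπ n z = 0 ↔
    ∃ g, L.d ((ComplexShape.up ℕ).prev n) n g = L.iCycles n z := by
  have h := (L.sc n).moduleCat_pOpcycles_eq_zero_iff (L.iCycles n z)
  have e : (L.sc n).pOpcycles (L.iCycles n z) = L.homologyι n (L.homologyπ n z) :=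
    (congr($(L.homology_π_ι n) z) : _ = _).symm
  have inj := (ModuleCat.mono_iff_injective (L.homologyι n)).1 inferInstance
  have e2 : (L.sc n).pOpcycles (L.iCycles n z) = 0 ↔ L.homologyπ n z = 0 := by
    rw [e]
    exact map_eq_zero_iff _ inj
  exact e2.symm.trans h
end

/-- `e` is represented by the cocycle `f`. -/
def Rep {X Y : ModuleCat.{u} R} (P : ProjectiveResolution X) (n : ℕ)
    (e : ((Ext R (ModuleCat.{u} R) n).obj (op X)).obj Y) (f : P.complex.X n ⟶ Y) : Prop :=
  ∃ z : (P.complex.linearYonedaObj R Y).cycles n,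
    (P.complex.linearYonedaObj R Y).homologyπ n z = (P.isoExt n Y).hom e ∧
    (P.complex.linearYonedaObj R Y).iCycles n z = f

variable {X Y : ModuleCat.{u} R} (P : ProjectiveResolution X) (n : ℕ)

lemma rep_exists (e : ((Ext R (ModuleCat.{u} R) n).obj (op X)).obj Y) :
    ∃ f : P.complex.X n ⟶ Y, P.complex.d (n+1) n ≫ f = 0 ∧ Rep P n e f := by
  obtain ⟨z, hz⟩ := homologyπ_surj _ _ ((P.isoExt n Y).hom e)
  exact ⟨_, cycle_d _ _ z, z, hz, rfl⟩

lemma rep_exists' (f : P.complex.X n ⟶ Y) (hf : P.complex.d (n+1) n ≫ f = 0) :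
    ∃ e : ((Ext R (ModuleCat.{u} R) n).obj (op X)).obj Y, Rep P n e f := by
  obtain ⟨z, hz⟩ := exists_cycle (P.complex.linearYonedaObj R Y) n f hf
  refine ⟨(P.isoExt (R := R) n Y).inv ((P.complex.linearYonedaObj R Y).homologyπ n z), z, ?_, hz⟩
  have h : (P.isoExt (R := R) n Y).inv ≫ (P.isoExt (R := R) n Y).hom = 𝟙 _ :=
    (P.isoExt (R := R) n Y).inv_hom_id
  exact (congr($h ((P.complex.linearYonedaObj R Y).homologyπ n z)) : _ = _).symm

lemma rep_zero {e : ((Ext R (ModuleCat.{u} R) n).obj (op X)).obj Y} {f : P.complex.X n ⟶ Y}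
    (h : Rep P n e f) : e = 0 ↔
      ∃ g : P.complex.X ((ComplexShape.up ℕ).prev n) ⟶ Y, P.complex.d n _ ≫ g = f := by
  obtain ⟨z, hz, rfl⟩ := h
  have h2 := homologyπ_eq_zero_iff _ _ z
  refine Iff.trans ?_ h2
  rw [hz]
  have inj := (ModuleCat.mono_iff_injective (P.isoExt (R := R) n Y).hom).1 inferInstance
  exact (map_eq_zero_iff _ inj).symm

lemma rep_map {X' : ModuleCat.{u} R} {g : X' ⟶ X} {P' : ProjectiveResolution X'}
    (φ : ProjectiveResolution.Hom P' P g)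
    {e : ((Ext R (ModuleCat.{u} R) n).obj (op X)).obj Y} {f : P.complex.X n ⟶ Y}
    (h : Rep P n e f) :
    Rep P' n (((Ext R (ModuleCat.{u} R) n).map g.op).app Y e) (φ.hom.f n ≫ f) := by
  obtain ⟨z, hz, rfl⟩ := h
  refine ⟨HomologicalComplex.cyclesMap (lyMap φ.hom Y) n z, ?_, ?_⟩
  · have h1 := congr($(isoExt_nat φ n Y) e)
    refine Eq.trans ?_ h1.symm
    have h2 := congr($(HomologicalComplex.homologyπ_naturality (lyMap φ.hom Y) n) z)
    refine h2.symm.trans ?_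
    exact congrArg _ hz
  · exact congr($(HomologicalComplex.cyclesMap_i (lyMap φ.hom Y) n) z)

lemma extMk_zero_iff {f : P.complex.X n ⟶ Y} (hf : P.complex.d (n+1) n ≫ f = 0) :
    P.extMk f (n+1) rfl hf = 0 ↔
      ∃ g : P.complex.X ((ComplexShape.up ℕ).prev n) ⟶ Y, P.complex.d n _ ≫ g = f := by
  rcases n with _ | n
  · simp only [← P.extEquivCohomologyClass.apply_eq_iff_eq,
      ProjectiveResolution.extEquivCohomologyClass_extMk,
      ProjectiveResolution.extEquivCohomologyClass_zero,
      CochainComplex.HomComplex.CohomologyClass.mk_eq_zero_iff]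
    rw [CochainComplex.HomComplex.Cocycle.toSingleMk_mem_coboundaries_iff _ _ _ _ _ 1 (by lia)]
    have h1 : P.cochainComplex.d (-((0:ℕ):ℤ)) 1 = 0 := by
      apply Limits.IsZero.eq_of_tgt
      exact CochainComplex.isZero_of_isStrictlyLE _ 0 1 (by lia)
    have h2 : P.complex.d 0 ((ComplexShape.up ℕ).prev 0) = 0 := by
      apply P.complex.shape
      simp
    simp only [h1, h2, Limits.zero_comp, exists_const]
    rw [eq_comm, Preadditive.IsIso.comp_left_eq_zero, eq_comm]
  · rw [P.extMk_eq_zero_iff f (n+2) rfl hf n rfl]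
    have : (ComplexShape.up ℕ).prev (n+1) = n := by simp
    rw [this]


/-- lift of a morphism to resolutions -/
def liftHom {X X' : ModuleCat.{u} R} (g : X' ⟶ X) (P' : ProjectiveResolution X')
    (P : ProjectiveResolution X) : ProjectiveResolution.Hom P' P g where
  hom := ProjectiveResolution.lift g P' P
  hom_f_zero_comp_π_f_zero := by
    have := ProjectiveResolution.lift_commutes g P' P
    exact congr(($this).f 0)

/-- Comparison between old and new Ext for vanishing along a family of maps. -/
theorem bridge {ι : Type*} {X : ModuleCat.{u} R} {X' : ι → ModuleCat.{u} R} (g : ∀ i, X' i ⟶ X)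
    (Y : ModuleCat.{u} R) (n : ℕ) :
    (∀ e : ((Ext R (ModuleCat.{u} R) n).obj (op X)).obj Y,
      ∃ i, ((Ext R (ModuleCat.{u} R) n).map (g i).op).app Y e = 0) ↔
    (∀ e : Abelian.Ext X Y n, ∃ i, (Abelian.Ext.mk₀ (g i)).comp e (zero_add n) = 0) := by
  let P := projectiveResolution X
  have key : ∀ (e : ((Ext R (ModuleCat.{u} R) n).obj (op X)).obj Y)
      (f : P.complex.X n ⟶ Y) (hf : P.complex.d (n+1) n ≫ f = 0) (h : Rep P n e f) (i : ι),
      ((Ext R (ModuleCat.{u} R) n).map (g i).op).app Y e = 0 ↔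
      (Abelian.Ext.mk₀ (g i)).comp (P.extMk f (n+1) rfl hf) (zero_add n) = 0 := by
    intro e f hf h i
    let φ := liftHom (g i) (projectiveResolution (X' i)) P
    rw [ProjectiveResolution.mk₀_comp_extMk f (n+1) rfl hf φ, extMk_zero_iff,
      rep_zero _ _ (rep_map P n φ h)]
  constructor
  · intro H e
    obtain ⟨f, hf, rfl⟩ := P.extMk_surjective e (n+1) rfl
    obtain ⟨e', he'⟩ := rep_exists' P n f hf
    obtain ⟨i, hi⟩ := H e'
    exact ⟨i, (key e' f hf he' i).1 hi⟩
  · intro H e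
    obtain ⟨f, hf, hr⟩ := rep_exists P n e
    obtain ⟨i, hi⟩ := H (P.extMk f (n+1) rfl hf)
    exact ⟨i, (key e f hf hr i).2 hi⟩

/-- The projection `R/I → R/J` for `I ≤ J`. -/
abbrev proj {I J : Ideal R} (h : I ≤ J) : ModuleCat.of R (R ⧸ I) ⟶ ModuleCat.of R (R ⧸ J) :=
  ModuleCat.ofHom (Submodule.mapQ I J LinearMap.id h)

open Limits in
theorem lc_iff (J : Ideal R) (n : ℕ) (M : ModuleCat.{u} R) :
    Subsingleton ((localCohomology J n).obj M) ↔
    ∀ t, ∀ e : Abelian.Ext (ModuleCat.of R (R ⧸ J ^ t)) M n,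
      ∃ u : {u // t ≤ u}, (Abelian.Ext.mk₀ (proj (Ideal.pow_le_pow_right u.2 : J ^ u.1 ≤ J ^ t))).comp e (zero_add n) = 0 := by
  let D := localCohomology.diagram (localCohomology.idealPowersDiagram J) n
  have hc : IsColimit (((evaluation _ _).obj M).mapCocone (colimit.cocone D)) :=
    isColimitOfPreserves _ (colimit.isColimit D)
  let c := ((evaluation _ _).obj M).mapCocone (colimit.cocone D)
  have e0 : (localCohomology J n).obj M = c.pt := rfl
  have : IsFiltered ℕᵒᵖᵒᵖ := inferInstance
  have : PreservesFilteredColimitsOfSize.{0, 0} (forget (ModuleCat.{u} R)) :=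
    preservesFilteredColimitsOfSize_shrink.{0, u, 0, u} _
  have : PreservesColimitsOfShape ℕᵒᵖᵒᵖ (forget (ModuleCat.{u} R)) :=
    PreservesFilteredColimitsOfSize.preserves_filtered_colimits _
  rw [e0]
  trans ∀ (t : ℕ) (e : ((Ext R (ModuleCat.{u} R) n).obj (op (ModuleCat.of R (R ⧸ J ^ t)))).obj M),
    ∃ u : {u // t ≤ u}, ((Ext R (ModuleCat.{u} R) n).map (proj (Ideal.pow_le_pow_right u.2 : J ^ u.1 ≤ J ^ t)).op).app M e = 0
  · constructor
    · intro hs t e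
      have h0 : c.ι.app (op (op t)) e = c.ι.app (op (op t)) 0 := hs.elim _ _
      obtain ⟨k, f, g, h⟩ := Concrete.isColimit_exists_of_rep_eq _ hc _ _ h0
      refine ⟨⟨k.unop.unop, f.unop.unop.le⟩, ?_⟩
      refine Eq.trans ?_ (h.trans (map_zero _))
      rfl
    · intro H
      refine subsingleton_of_forall_eq 0 fun x => ?_
      obtain ⟨t, e, rfl⟩ := Concrete.isColimit_exists_rep _ hc x
      obtain ⟨u, hu⟩ := H t.unop.unop e
      let f : t ⟶ op (op u.1) := (homOfLE u.2).op.op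
      have := congr($(c.w f) e)
      refine Eq.trans this.symm ?_
      refine Eq.trans ?_ (map_zero (c.ι.app (op (op u.1))).hom)
      exact congrArg (c.ι.app (op (op u.1))).hom hu
  · refine forall_congr' fun t => ?_
    exact bridge (fun u : {u // t ≤ u} => proj (Ideal.pow_le_pow_right u.2)) M n
end LCBridge

namespace LCMath
open LCBridge Abelian
variable {R : Type u} [CommRing R]

/-- restriction along the projection between quotient rings -/
def res {I I' : Ideal R} (h : I ≤ I') {M : ModuleCat.{u} R} {n : ℕ}
    (e : Ext (ModuleCat.of R (R ⧸ I')) M n) : Ext (ModuleCat.of R (R ⧸ I)) M n :=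
  (Ext.mk₀ (proj h)).comp e (zero_add n)

lemma proj_proj {I I' I'' : Ideal R} (h : I ≤ I') (h' : I' ≤ I'') :
    proj h ≫ proj h' = proj (h.trans h') := by
  ext
  rfl

lemma res_res {I I' I'' : Ideal R} (h : I ≤ I') (h' : I' ≤ I'') {M : ModuleCat.{u} R} {n : ℕ}
    (e : Ext (ModuleCat.of R (R ⧸ I'')) M n) : res h (res h' e) = res (h.trans h') e := by
  unfold res
  rw [Ext.mk₀_comp_mk₀_assoc, proj_proj]

lemma res_zero {I I' : Ideal R} (h : I ≤ I') {M : ModuleCat.{u} R} {n : ℕ} :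
    res h (0 : Ext (ModuleCat.of R (R ⧸ I')) M n) = 0 := by
  simp [res]

lemma res_add {I I' : Ideal R} (h : I ≤ I') {M : ModuleCat.{u} R} {n : ℕ}
    (e e' : Ext (ModuleCat.of R (R ⧸ I')) M n) : res h (e + e') = res h e + res h e' := by
  simp [res]

lemma res_comp {I I' : Ideal R} (h : I ≤ I') {M N : ModuleCat.{u} R} {a b c : ℕ}
    (e : Ext (ModuleCat.of R (R ⧸ I')) M a) (f : Ext M N b) (hc : a + b = c) :
    res h (e.comp f hc) = (res h e).comp f hc := by
  unfold res
  rw [Ext.comp_assoc _ _ _ (zero_add a) hc (by omega)]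

lemma res_smul {I I' : Ideal R} (h : I ≤ I') {M : ModuleCat.{u} R} {n : ℕ} (r : R)
    (e : Ext (ModuleCat.of R (R ⧸ I')) M n) : res h (r • e) = r • res h e := by
  simp [res]

/-- `e` dies in the colimit over powers of `J`. -/
def Dies (J : Ideal R) {I : Ideal R} {M : ModuleCat.{u} R} {n : ℕ}
    (e : Ext (ModuleCat.of R (R ⧸ I)) M n) : Prop :=
  ∃ u, ∃ h : J ^ u ≤ I, res h e = 0

/-- vanishing of `H^n_J(M)` -/
def V (J : Ideal R) (n : ℕ) (M : ModuleCat.{u} R) : Prop :=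
  ∀ I : Ideal R, (∃ t, J ^ t ≤ I) → ∀ e : Ext (ModuleCat.of R (R ⧸ I)) M n, Dies J e

lemma Dies.of_res {J I I' : Ideal R} (h : I ≤ I') {M : ModuleCat.{u} R} {n : ℕ}
    {e : Ext (ModuleCat.of R (R ⧸ I')) M n} (H : Dies J (res h e)) : Dies J e := by
  obtain ⟨u, hu, H⟩ := H
  exact ⟨u, hu.trans h, by rw [← H, res_res]⟩

lemma Dies.comp {J I : Ideal R} {M N : ModuleCat.{u} R} {a b c : ℕ}
    {e : Ext (ModuleCat.of R (R ⧸ I)) M a} (H : Dies J e) (f : Ext M N b) (hc : a + b = c) :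
    Dies J (e.comp f hc) := by
  obtain ⟨u, hu, H⟩ := H
  exact ⟨u, hu, by rw [res_comp, H, Ext.zero_comp]⟩

lemma V_iff (J : Ideal R) (n : ℕ) (M : ModuleCat.{u} R) :
    V J n M ↔ ∀ t, ∀ e : Abelian.Ext (ModuleCat.of R (R ⧸ J ^ t)) M n,
      ∃ u : {u // t ≤ u}, (Abelian.Ext.mk₀ (proj (Ideal.pow_le_pow_right u.2 : J ^ u.1 ≤ J ^ t))).comp e (zero_add n) = 0 := by
  constructor
  · intro H t e
    obtain ⟨u, hu, H⟩ := H (J ^ t) ⟨t, le_rfl⟩ e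
    refine ⟨⟨max u t, le_max_right _ _⟩, ?_⟩
    have : res (Ideal.pow_le_pow_right (le_max_left u t) : J ^ (max u t) ≤ J ^ u) (res hu e) = 0 := by
      rw [H, res_zero]
    rwa [res_res] at this
  · rintro H I ⟨t, ht⟩ e
    obtain ⟨u, H⟩ := H t (res ht e)
    exact Dies.of_res ht ⟨u.1, _, H⟩

lemma V_of_ses {J : Ideal R} {n : ℕ} {S : ShortComplex (ModuleCat.{u} R)} (hS : S.ShortExact)
    (h1 : V J n S.X₁) (h3 : V J n S.X₃) : V J n S.X₂ := by
  intro I hI e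
  obtain ⟨u, hu, h⟩ := h3 I hI (e.comp (Ext.mk₀ S.g) (add_zero n))
  rw [res_comp] at h
  obtain ⟨x, hx⟩ := Ext.covariant_sequence_exact₂ _ hS _ h
  apply Dies.of_res hu
  rw [← hx]
  exact (h1 _ ⟨u, le_rfl⟩ x).comp _ _

lemma V_of_subsingleton {J : Ideal R} {n : ℕ} {M : ModuleCat.{u} R} [Subsingleton M] : V J n M := by
  rintro I ⟨t, ht⟩ e
  refine ⟨t, ht, ?_⟩
  have h0 : 𝟙 M = 0 := by
    ext x
    exact Subsingleton.elim _ _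
  rw [← Ext.comp_mk₀_id (res ht e), h0, Ext.mk₀_zero, Ext.comp_zero]

lemma V_of_iso {J : Ideal R} {n : ℕ} {M N : ModuleCat.{u} R} (i : M ≅ N) (H : V J n M) :
    V J n N := by
  intro I hI e
  have := (H I hI (e.comp (Ext.mk₀ i.inv) (add_zero n))).comp (Ext.mk₀ i.hom) (add_zero n)
  rwa [Ext.comp_assoc_of_third_deg_zero, Ext.mk₀_comp_mk₀, i.inv_hom_id, Ext.comp_mk₀_id] at this

/-- Mayer–Vietoris short complex -/
def mvS (A B : Ideal R) : ShortComplex (ModuleCat.{u} R) :=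
  ModuleCat.shortComplexOfCompEqZero (M := R ⧸ (A ⊓ B)) (N := (R ⧸ A) × (R ⧸ B))
    (L := R ⧸ (A ⊔ B))
    (LinearMap.prod (Submodule.mapQ _ _ LinearMap.id inf_le_left)
      (Submodule.mapQ _ _ LinearMap.id inf_le_right))
    ((Submodule.mapQ A (A ⊔ B) LinearMap.id le_sup_left).comp (LinearMap.fst R _ _) -
      (Submodule.mapQ B (A ⊔ B) LinearMap.id le_sup_right).comp (LinearMap.snd R _ _)) (by
      ext; simp)

lemma mvS_exact (A B : Ideal R) : (mvS A B).ShortExact := by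
  apply ModuleCat.shortComplex_shortExact
  · rintro ⟨x, y⟩
    obtain ⟨x, rfl⟩ := Submodule.Quotient.mk_surjective _ x
    obtain ⟨y, rfl⟩ := Submodule.Quotient.mk_surjective _ y
    constructor
    · intro h
      have h : (Submodule.Quotient.mk x : R ⧸ (A ⊔ B)) - Submodule.Quotient.mk y = 0 := h
      rw [← Submodule.Quotient.mk_sub, Submodule.Quotient.mk_eq_zero, Submodule.mem_sup] at h
      obtain ⟨a, ha, b, hb, hab⟩ := h
      refine ⟨Submodule.Quotient.mk (x - a), ?_⟩
      refine Prod.ext ?_ ?_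
      · change (Submodule.Quotient.mk (x - a) : R ⧸ A) = Submodule.Quotient.mk x
        rw [Submodule.Quotient.eq]
        simpa using ha
      · change (Submodule.Quotient.mk (x - a) : R ⧸ B) = Submodule.Quotient.mk y
        rw [Submodule.Quotient.eq]
        have : x - a - y = b := by linear_combination -hab
        rwa [this]
    · rintro ⟨z, hz⟩
      obtain ⟨z, rfl⟩ := Submodule.Quotient.mk_surjective _ z
      rw [← hz]
      change (Submodule.Quotient.mk z : R ⧸ (A ⊔ B)) - Submodule.Quotient.mk z = 0
      simp
  · rw [injective_iff_map_eq_zero]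
    intro z hz
    obtain ⟨z, rfl⟩ := Submodule.Quotient.mk_surjective _ z
    have h1 : (Submodule.Quotient.mk z : R ⧸ A) = 0 := congrArg Prod.fst hz
    have h2 : (Submodule.Quotient.mk z : R ⧸ B) = 0 := congrArg Prod.snd hz
    rw [Submodule.Quotient.mk_eq_zero] at h1 h2
    exact (Submodule.Quotient.mk_eq_zero _).2 ⟨h1, h2⟩
  · intro z
    obtain ⟨z, rfl⟩ := Submodule.Quotient.mk_surjective _ z
    refine ⟨(Submodule.Quotient.mk z, 0), ?_⟩
    change (Submodule.Quotient.mk z : R ⧸ (A ⊔ B)) - 0 = _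
    simp

/-- functoriality -/
def mvMap {A B A' B' : Ideal R} (hA : A ≤ A') (hB : B ≤ B') : mvS A B ⟶ mvS A' B' where
  τ₁ := proj (inf_le_inf hA hB)
  τ₂ := ModuleCat.ofHom (LinearMap.prodMap (Submodule.mapQ A A' LinearMap.id hA)
    (Submodule.mapQ B B' LinearMap.id hB))
  τ₃ := proj (sup_le_sup hA hB)
  comm₁₂ := by
    ext x
    obtain ⟨x, rfl⟩ := Submodule.Quotient.mk_surjective _ x
    rfl
  comm₂₃ := by
    ext x
    obtain ⟨x, y⟩ := x
    obtain ⟨x, rfl⟩ := Submodule.Quotient.mk_surjective _ x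
    obtain ⟨y, rfl⟩ := Submodule.Quotient.mk_surjective _ y
    rfl

lemma V_mv [IsNoetherianRing R] {a b : Ideal R} {n : ℕ} {M : ModuleCat.{u} R} (ha : V a n M)
    (hb : V b n M) (hab : V (a ⊔ b) (n + 1) M) : V (a ⊓ b) n M := by
  rintro I ⟨t, ht⟩ e
  obtain ⟨k, hk⟩ := Ideal.exists_pow_inf_eq_pow_smul (M := R) a (b ^ t)
  have hle : a ^ (k + t) ⊓ b ^ (k + t) ≤ I := by
    refine le_trans ?_ ht
    have h1 := hk (k + t) (by omega)
    rw [smul_eq_mul, Ideal.mul_top, Nat.add_sub_cancel_left] at h1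
    calc a ^ (k + t) ⊓ b ^ (k + t) ≤ a ^ (k + t) ⊓ b ^ t :=
          inf_le_inf le_rfl (Ideal.pow_le_pow_right (by omega))
      _ ≤ a ^ t * b ^ t := by
          rw [h1]
          exact Ideal.mul_mono le_rfl inf_le_right
      _ = (a * b) ^ t := (mul_pow _ _ _).symm
      _ ≤ (a ⊓ b) ^ t := Ideal.pow_right_mono Ideal.mul_le_inf t
  apply Dies.of_res hle
  generalize res hle e = e
  generalize k + t = s at e
  obtain ⟨d, hd⟩ : ∃ d : Ext (ModuleCat.of R (R ⧸ (a ^ s ⊔ b ^ s))) M (n + 1),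
    d = (mvS_exact (a ^ s) (b ^ s)).extClass.comp e (add_comm 1 n) := ⟨_, rfl⟩
  obtain ⟨v, hv, h0⟩ := hab (a ^ s ⊔ b ^ s) ⟨s + s, Ideal.sup_pow_add_le_pow_sup_pow⟩ d
  have hA : a ^ (max v s) ≤ a ^ s := Ideal.pow_le_pow_right (le_max_right _ _)
  have hB : b ^ (max v s) ≤ b ^ s := Ideal.pow_le_pow_right (le_max_right _ _)
  have hle2 : a ^ (max v s) ⊔ b ^ (max v s) ≤ (a ⊔ b) ^ v :=
    (sup_le (Ideal.pow_right_mono le_sup_left _) (Ideal.pow_right_mono le_sup_right _)).trans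
      (Ideal.pow_le_pow_right (le_max_left _ _))
  apply Dies.of_res (inf_le_inf hA hB)
  have nat := ShortComplex.ShortExact.extClass_naturality (mvS_exact (a ^ max v s) (b ^ max v s))
    (mvS_exact (a ^ s) (b ^ s)) (mvMap hA hB)
  have h1 : (mvS_exact (a ^ max v s) (b ^ max v s)).extClass.comp (res (inf_le_inf hA hB) e)
      (add_comm 1 n) = 0 := by
    have h2 := congrArg (res hle2) h0
    rw [res_res, res_zero] at h2
    rw [hd] at h2
    refine Eq.trans (Eq.trans ?_ (Ext.comp_assoc (Ext.mk₀ (mvMap hA hB).τ₃)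
      (mvS_exact (a ^ s) (b ^ s)).extClass e (zero_add 1) (add_comm 1 n) (by omega))) h2
    refine Eq.trans (Ext.comp_assoc (mvS_exact (a ^ max v s) (b ^ max v s)).extClass
      (Ext.mk₀ (mvMap hA hB).τ₁) e (add_zero 1) (zero_add n) (by omega)).symm ?_
    exact congrArg (fun z => Ext.comp z e (add_comm 1 n)) nat
  generalize res (inf_le_inf hA hB) e = e' at h1
  generalize max v s = w at *
  obtain ⟨x, hx⟩ := Ext.contravariant_sequence_exact₁ (mvS_exact (a ^ w) (b ^ w)) _ _ _ h1
  let i1 : ModuleCat.of R (R ⧸ a ^ w) ⟶ (mvS (a ^ w) (b ^ w)).X₂ :=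
    ModuleCat.ofHom (LinearMap.inl R (R ⧸ a ^ w) (R ⧸ b ^ w))
  let i2 : ModuleCat.of R (R ⧸ b ^ w) ⟶ (mvS (a ^ w) (b ^ w)).X₂ :=
    ModuleCat.ofHom (LinearMap.inr R (R ⧸ a ^ w) (R ⧸ b ^ w))
  have hf : (mvS (a ^ w) (b ^ w)).f = proj inf_le_left ≫ i1 + proj inf_le_right ≫ i2 := by
    ext z
    obtain ⟨z, rfl⟩ := Submodule.Quotient.mk_surjective _ z
    refine Prod.ext ?_ ?_
    · exact (add_zero _).symm
    · exact (zero_add _).symm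
  obtain ⟨u1, hu1, e1⟩ := ha _ ⟨w, le_rfl⟩ ((Ext.mk₀ i1).comp x (zero_add n))
  obtain ⟨u2, hu2, e2⟩ := hb _ ⟨w, le_rfl⟩ ((Ext.mk₀ i2).comp x (zero_add n))
  have l1 : (a ⊓ b) ^ (u1 + u2) ≤ a ^ u1 :=
    (Ideal.pow_right_mono inf_le_left _).trans (Ideal.pow_le_pow_right (by omega))
  have l2 : (a ⊓ b) ^ (u1 + u2) ≤ b ^ u2 :=
    (Ideal.pow_right_mono inf_le_right _).trans (Ideal.pow_le_pow_right (by omega))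
  refine ⟨u1 + u2, le_inf (l1.trans hu1) (l2.trans hu2), ?_⟩
  have hx' : e' = res inf_le_left ((Ext.mk₀ i1).comp x (zero_add n)) +
      res inf_le_right ((Ext.mk₀ i2).comp x (zero_add n)) := by
    unfold res
    rw [Ext.mk₀_comp_mk₀_assoc, Ext.mk₀_comp_mk₀_assoc, ← Ext.add_comp, ← Ext.mk₀_add]
    exact hx.symm.trans (congrArg (fun z => (Ext.mk₀ z).comp x (zero_add n)) hf)
  rw [hx', res_add, res_res, res_res]
  have c1 := congrArg (res l1) e1
  have c2 := congrArg (res l2) e2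
  rw [res_res, res_zero] at c1 c2
  rw [c1, c2, add_zero]
end LCMath

namespace LCMath
open LCBridge Abelian
open scoped Pointwise
variable {R : Type u} [CommRing R]

/-- every element is killed by a power of `J` -/
def Tors (J : Ideal R) (N : Type u) [AddCommGroup N] [Module R N] : Prop :=
  ∀ x : N, ∃ k, ∀ r ∈ J ^ k, r • x = 0

/-- the `J`-torsion submodule -/
def Gam (J : Ideal R) (E : Type u) [AddCommGroup E] [Module R E] : Submodule R E where
  carrier := {x | ∃ k, ∀ r ∈ J ^ k, r • x = 0}
  zero_mem' := ⟨0, by simp⟩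
  add_mem' := by
    rintro x y ⟨k, hk⟩ ⟨l, hl⟩
    refine ⟨k + l, fun r hr => ?_⟩
    rw [smul_add, hk r (Ideal.pow_le_pow_right (by omega) hr),
      hl r (Ideal.pow_le_pow_right (by omega) hr), add_zero]
  smul_mem' := by
    rintro c x ⟨k, hk⟩
    exact ⟨k, fun r hr => by rw [smul_comm, hk r hr, smul_zero]⟩

lemma tors_gam (J : Ideal R) (E : Type u) [AddCommGroup E] [Module R E] : Tors J (Gam J E) := by
  rintro ⟨x, k, hk⟩
  exact ⟨k, fun r hr => Subtype.ext (hk r hr)⟩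

lemma baer_gam [IsNoetherianRing R] (J : Ideal R) (E : Type u) [AddCommGroup E] [Module R E]
    (hE : Module.Injective R E) : Module.Baer R (Gam J E) := by
  intro I g
  obtain ⟨S, hS⟩ : (⊤ : Submodule R I).FG := Module.Finite.fg_top
  choose k hk using fun x : I => tors_gam J E (g x)
  have hK : ∀ x : I, ∀ r ∈ J ^ (S.sup k), r • g x = 0 := by
    intro x
    have hx : x ∈ Submodule.span R (S : Set I) := hS ▸ Submodule.mem_top
    induction hx using Submodule.span_induction with
    | mem x h => exact fun r hr => hk x r (Ideal.pow_le_pow_right (Finset.le_sup h) hr)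
    | zero => simp
    | add x y _ _ hx hy => intro r hr; rw [map_add, smul_add, hx r hr, hy r hr, add_zero]
    | smul a x _ hx => intro r hr; rw [map_smul, smul_comm, hx r hr, smul_zero]
  generalize S.sup k = K at hK
  obtain ⟨c, hc⟩ := Ideal.exists_pow_inf_eq_pow_smul (M := R) J I
  have h1 := hc (c + K) (by omega)
  rw [smul_eq_mul, Ideal.mul_top, Nat.add_sub_cancel_left] at h1
  generalize c + K = s at h1
  have hker : Submodule.comap I.subtype (J ^ s) ≤ LinearMap.ker g := by
    rintro ⟨x, hxI⟩ hx
    have h2 : x ∈ J ^ K • I := by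
      have : x ∈ J ^ s ⊓ I := ⟨hx, hxI⟩
      rw [h1] at this
      exact Submodule.smul_mono le_rfl inf_le_right this
    have h3 : Submodule.map I.subtype (J ^ K • (⊤ : Submodule R I)) = J ^ K • I := by
      rw [Submodule.map_smul'']
      simp
    rw [← h3] at h2
    obtain ⟨y, hy, hyx⟩ := h2
    have h4 : J ^ K • (⊤ : Submodule R I) ≤ LinearMap.ker g := by
      rw [Submodule.smul_le]
      intro r hr z _
      rw [LinearMap.mem_ker, map_smul, hK z r hr]
    have h5 : y = ⟨x, hxI⟩ := Subtype.ext hyx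
    exact h5 ▸ h4 hy
  let i : (I ⧸ Submodule.comap I.subtype (J ^ s)) →ₗ[R] (R ⧸ J ^ s) :=
    Submodule.mapQ _ _ I.subtype le_rfl
  have hi : Function.Injective i := by
    rw [injective_iff_map_eq_zero]
    intro z hz
    obtain ⟨z, rfl⟩ := Submodule.Quotient.mk_surjective _ z
    rw [Submodule.mapQ_apply, Submodule.Quotient.mk_eq_zero] at hz
    exact (Submodule.Quotient.mk_eq_zero _).2 hz
  obtain ⟨h, hh⟩ := hE.out i hi ((Gam J E).subtype.comp (Submodule.liftQ _ g hker))
  refine ⟨LinearMap.codRestrict (Gam J E) (h.comp (Submodule.mkQ (J ^ s))) ?_, ?_⟩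
  · intro r
    refine ⟨s, fun a ha => ?_⟩
    rw [← map_smul, LinearMap.comp_apply]
    have : Submodule.mkQ (J ^ s) (a • r) = 0 := by
      rw [Submodule.mkQ_apply, Submodule.Quotient.mk_eq_zero]
      exact Ideal.mul_mem_right _ _ ha
    rw [this, map_zero]
  · intro x hx
    apply Subtype.ext
    exact hh (Submodule.Quotient.mk ⟨x, hx⟩)

lemma V_of_tors [IsNoetherianRing R] (J : Ideal R) (n : ℕ) :
    ∀ (N : Type u) [AddCommGroup N] [Module R N], Tors J N → V J (n + 1) (ModuleCat.of R N) := by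
  induction n with
  | zero => ?_
  | succ n ih => ?_
  all_goals
    intro N _ _ hN
    let E : ModuleCat.{u} R := Injective.under (ModuleCat.of R N)
    let ι : N →ₗ[R] E := (Injective.ι (ModuleCat.of R N)).hom
    have hι : Function.Injective ι :=
      (ModuleCat.mono_iff_injective (Injective.ι (ModuleCat.of R N))).1 inferInstance
    have hE0 : Injective (ModuleCat.of R E) :=
      (inferInstance : Injective (Injective.under (ModuleCat.of R N)))
    have hE : Module.Injective R E := Module.injective_module_of_injective_object R E
    have hG : Module.Injective R (Gam J E) := (baer_gam J E hE).injective
    have hG' : Injective (ModuleCat.of R (Gam J E)) :=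
      Module.injective_object_of_injective_module R (Gam J E)
    let f : N →ₗ[R] Gam J E := LinearMap.codRestrict _ ι (fun x => by
      obtain ⟨k, hk⟩ := hN x
      exact ⟨k, fun r hr => by rw [← map_smul, hk r hr, map_zero]⟩)
    have hf : Function.Injective f := fun x y h => hι (congrArg Subtype.val h)
    let S := ModuleCat.shortComplexOfCompEqZero f (LinearMap.range f).mkQ
      (LinearMap.range_mkQ_comp f)
    have hS : S.ShortExact := ModuleCat.shortComplex_shortExact S
      (LinearMap.exact_map_mkQ_range f) hf (Submodule.mkQ_surjective _)
    intro I hI e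
    obtain ⟨x, hx⟩ := Ext.covariant_sequence_exact₁ _ hS e (Ext.eq_zero_of_injective
      (I := ModuleCat.of R (Gam J E)) _) rfl
    rw [← hx]
  · obtain ⟨t, ht⟩ := hI
    obtain ⟨q, rfl⟩ := (Ext.mk₀_bijective _ _).2 x
    obtain ⟨γ, hγ⟩ := Submodule.mkQ_surjective (LinearMap.range f) (q.hom (Submodule.Quotient.mk 1))
    obtain ⟨k, hk⟩ := tors_gam J E γ
    have hu : J ^ (k + t) ≤ I := (Ideal.pow_le_pow_right (by omega)).trans ht
    let φ : (R ⧸ J ^ (k + t)) →ₗ[R] Gam J E :=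
      Submodule.liftQ _ (LinearMap.toSpanSingleton R _ γ) (fun r hr => by
        exact hk r (Ideal.pow_le_pow_right (by omega) hr))
    refine ⟨k + t, hu, ?_⟩
    have hq : proj hu ≫ q = ModuleCat.ofHom φ ≫ S.g := by
      ext
      refine Eq.trans hγ.symm ?_
      change _ = (LinearMap.range f).mkQ ((1 : R) • γ)
      rw [one_smul]
    rw [res_comp]
    unfold res
    rw [Ext.mk₀_comp_mk₀, hq, ← Ext.mk₀_comp_mk₀,
      Ext.comp_assoc _ _ _ (zero_add 0) (zero_add 1) (by omega), hS.comp_extClass, Ext.comp_zero]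
  · refine (ih (Gam J E ⧸ LinearMap.range f) ?_ I hI x).comp _ _
    intro y
    obtain ⟨γ, rfl⟩ := Submodule.mkQ_surjective _ y
    obtain ⟨k, hk⟩ := tors_gam J E γ
    exact ⟨k, fun r hr => by rw [← map_smul, hk r hr, map_zero]⟩

/-- if `r` acts injectively on `N` ... -/
lemma dies_of_smul {J : Ideal R} {n : ℕ} {N Q : ModuleCat.{u} R} (r : R) (g : N ⟶ Q)
    (w : (r • 𝟙 N) ≫ g = 0)
    (hS : (ShortComplex.mk (r • 𝟙 N) g w).ShortExact) (hV : V J n Q) {I : Ideal R}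
    (hI : ∃ t, J ^ t ≤ I)
    (e : Ext (ModuleCat.of R (R ⧸ I)) N (n + 1)) (s : ℕ) (h : r ^ s • e = 0) : Dies J e := by
  induction s generalizing I e with
  | zero =>
    rw [pow_zero, one_smul] at h
    obtain ⟨t, ht⟩ := hI
    exact ⟨t, ht, by rw [h, res_zero]⟩
  | succ s ih =>
    have h1 : (r ^ s • e).comp (Ext.mk₀ (r • 𝟙 N)) (add_zero _) = 0 := by
      rw [Ext.mk₀_smul, Ext.comp_smul, Ext.comp_mk₀_id, smul_smul, ← pow_succ', h]
    obtain ⟨z, hz⟩ := Ext.covariant_sequence_exact₁ _ hS _ h1 rfl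
    obtain ⟨u, hu, h2⟩ := (hV I hI z).comp hS.extClass rfl
    rw [hz, res_smul] at h2
    exact Dies.of_res hu (ih ⟨u, le_rfl⟩ _ h2)

lemma smul_ext_eq_zero {I : Ideal R} {n : ℕ} {N : ModuleCat.{u} R} (r : R) (hr : r ∈ I)
    (e : Ext (ModuleCat.of R (R ⧸ I)) N n) : r • e = 0 := by
  have h0 : r • 𝟙 (ModuleCat.of R (R ⧸ I)) = 0 := by
    ext
    change r • (Submodule.Quotient.mk 1 : R ⧸ I) = 0
    rw [← Submodule.Quotient.mk_smul, Submodule.Quotient.mk_eq_zero]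
    exact Ideal.mul_mem_right _ _ hr
  rw [← Ext.mk₀_id_comp e, ← Ext.smul_comp, ← Ext.mk₀_smul, h0, Ext.mk₀_zero, Ext.zero_comp]

theorem V_of_dim [IsNoetherianRing R] (J : Ideal R) (n : ℕ) :
    ∀ (N : Type u) [AddCommGroup N] [Module R N] [Module.Finite R N],
      Module.supportDim R N < n → V J n (ModuleCat.of R N) := by
  induction n with
  | zero =>
    intro N _ _ _ h
    by_cases hN : Subsingleton N
    · exact V_of_subsingleton (M := ModuleCat.of R N)
    · have : Nontrivial N := not_subsingleton_iff_nontrivial.1 hN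
      have h1 := Module.supportDim_ne_bot_of_nontrivial R N
      exfalso
      obtain ⟨d, hd⟩ := WithBot.ne_bot_iff_exists.1 h1
      rw [← hd] at h
      exact absurd (WithBot.coe_lt_coe.1 (by exact_mod_cast h : ((d : ℕ∞) : WithBot ℕ∞) < ((0 : ℕ∞) : WithBot ℕ∞))) (by simp)
  | succ n ih =>
    intro N _ _ hfin
    induction hfin using IsNoetherianRing.induction_on_isQuotientEquivQuotientPrime R with
    | subsingleton N =>
      intro _
      exact V_of_subsingleton (M := ModuleCat.of R N)
    | exact N₁ N₂ N₃ f g hf hg hfg h₁ h₃ =>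
      intro h
      let S := ModuleCat.shortComplexOfCompEqZero f g hfg.linearMap_comp_eq_zero
      have hS : S.ShortExact := ModuleCat.shortComplex_shortExact S hfg hf hg
      exact V_of_ses hS (h₁ ((Module.supportDim_le_of_injective f hf).trans_lt h))
        (h₃ ((Module.supportDim_le_of_surjective g hg).trans_lt h))
    | quotient N p i =>
      intro h
      have hp := p.2
      by_cases hJ : J ≤ p.1
      · apply V_of_tors
        intro x
        refine ⟨1, fun r hr => i.injective ?_⟩
        rw [pow_one] at hr
        rw [map_smul, map_zero]
        obtain ⟨y, hy⟩ := Submodule.Quotient.mk_surjective _ (i x)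
        rw [← hy, ← Submodule.Quotient.mk_smul, Submodule.Quotient.mk_eq_zero]
        exact Ideal.mul_mem_right _ _ (hJ hr)
      · obtain ⟨r, hrJ, hrp⟩ := SetLike.not_le_iff_exists.1 hJ
        have hann : Module.annihilator R N = p.1 := by
          rw [i.annihilator_eq, Ideal.annihilator_quotient]
        have hmin : ∀ q ∈ (Module.annihilator R N).minimalPrimes, r ∉ q := by
          intro q hq
          rw [hann, Ideal.minimalPrimes_eq_subsingleton_self] at hq
          rw [Set.mem_singleton_iff.1 hq]
          exact hrp
        have hdim := Module.supportDim_quotSMulTop_succ_le_of_notMem_minimalPrimes hmin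
        have hQ : V J n (ModuleCat.of R (QuotSMulTop r N)) := by
          apply ih
          have h2 := hdim.trans_lt h
          push_cast at h2
          exact lt_of_add_lt_add_right h2
        have hinj : Function.Injective (LinearMap.lsmul R N r) := by
          rw [injective_iff_map_eq_zero]
          intro x hx
          apply i.injective
          have hx : r • x = 0 := hx
          have h3 : r • i x = 0 := by rw [← map_smul, hx, map_zero]
          obtain ⟨y, hy⟩ := Submodule.Quotient.mk_surjective _ (i x)
          rw [← hy, ← Submodule.Quotient.mk_smul, Submodule.Quotient.mk_eq_zero] at h3
          rw [← hy, map_zero, Submodule.Quotient.mk_eq_zero]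
          exact (hp.mem_or_mem h3).resolve_left hrp
        have w : (r • 𝟙 (ModuleCat.of R N)) ≫ ModuleCat.ofHom (r • (⊤ : Submodule R N)).mkQ = 0 := by
          ext x
          change Submodule.Quotient.mk (r • x) = 0
          rw [Submodule.Quotient.mk_eq_zero]
          exact Submodule.smul_mem_pointwise_smul _ _ _ trivial
        have hS : (ShortComplex.mk (r • 𝟙 (ModuleCat.of R N))
            (ModuleCat.ofHom (r • (⊤ : Submodule R N)).mkQ) w).ShortExact := by
          apply ModuleCat.shortComplex_shortExact
          · intro x
            change Submodule.Quotient.mk x = 0 ↔ _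
            rw [Submodule.Quotient.mk_eq_zero, Submodule.mem_smul_pointwise_iff_exists]
            constructor
            · rintro ⟨y, _, hy⟩
              exact ⟨y, hy⟩
            · rintro ⟨y, hy⟩
              exact ⟨y, trivial, hy⟩
          · exact hinj
          · exact Submodule.mkQ_surjective _
        rintro I ⟨t, ht⟩ e
        exact dies_of_smul r _ w hS hQ ⟨t, ht⟩ e t
          (smul_ext_eq_zero _ (ht (Ideal.pow_mem_pow hrJ t)) e)

end LCMath

namespace LCMath
open LCBridge Abelian

theorem V_finset {R : Type u} [CommRing R] [IsNoetherianRing R] {M : ModuleCat.{u} R} {n l : ℕ}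
    (hd : ∀ J : Ideal R, V J (n + 1) M) (p : Fin l → Ideal R) (h : ∀ i, V (p i) n M)
    (s : Finset (Fin l)) (hs : s.Nonempty) : V (s.inf p) n M := by
  induction hs using Finset.Nonempty.cons_induction with
  | singleton a => simpa using h a
  | cons a s ha hs ih =>
    rw [Finset.inf_cons]
    exact V_mv (h a) ih (hd _)

end LCMath

variable {R : Type u} [CommRing R] [IsNoetherianRing R] [IsLocalRing R]
variable {M : Type u} [AddCommGroup M] [Module R M] [Module.Finite R M] [Nontrivial M]

theorem stmt17 (l : ℕ) (hl : 0 < l) (p : Fin l → Ideal R) (hp : ∀ i, (p i).IsPrime)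
    (n : ℕ)
    (hn : ((n : ℕ∞) : WithBot ℕ∞) = ringKrullDim (R ⧸ Module.annihilator R M))
    (hvan : ∀ i, Subsingleton ↥((localCohomology (p i) n).obj (ModuleCat.of R M))) :
    Subsingleton ↥((localCohomology (⨅ i, p i) n).obj (ModuleCat.of R M)) := by
  have hdim : ∀ J : Ideal R, LCMath.V J (n + 1) (ModuleCat.of R M) := by
    intro J
    apply LCMath.V_of_dim
    rw [Module.supportDim_eq_ringKrullDim_quotient_annihilator, ← hn]
    exact_mod_cast Nat.lt_succ_self n
  have hne : (Finset.univ : Finset (Fin l)).Nonempty := ⟨⟨0, hl⟩, Finset.mem_univ _⟩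
  have key := LCMath.V_finset hdim p
    (fun i => (LCMath.V_iff _ _ _).2 ((LCBridge.lc_iff _ _ _).1 (hvan i))) Finset.univ hne
  rw [Finset.inf_univ_eq_iInf] at key
  exact (LCBridge.lc_iff _ _ _).2 ((LCMath.V_iff _ _ _).1 key)
end
end
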